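/- arXiv:1505.01189 — 2 statements merged into one kernel-verified Lean document; each statement's English description precedes it below -/
import Mathlib

section
/- Let ε > 0 and let p = p(n) satisfy n·p(n) → ∞ and p(n) ≤ n^{−1/2−ε}. Pick a random G(n,p) graph G = (V,E) and two uniformly random independent maps φ, ψ : {1,...,k} → V with 3 ≤ k ≤ log n; condition on the event C₁ that (φ,ψ) is a type I configuration. Let T = Image(φ) ∪ Image(ψ), t = |T|, and for each i let U_i be the set of neighbors of φ(i) that have no neighbor in Ñ(T) other than φ(i). There exists a constant c > 0 such that for all sufficiently large n, with conditional probability at least 1 − e^{−c·n·p·t}: (a) |Ñ(T)| < 2·n·p·t, and (b) there are at least 7k/8 indices i ∈ {1,...,k} for which np/4 ≤ |U_i| ≤ 4np. -/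
/-!
The event `TypeI` only concerns edges inside `T = range φ ∪ range ψ`, so conditioning on it leaves
the edges leaving `T`, and those outside `T`, independent with probability `p`
(`bprob_typeI_and_atypical`). Write `L = n p`, `t = |T|`, and `dᵥ` for the number of neighbors in
`T` of a vertex `v ∉ T`.

*Deterministic part* (`good_of_not_atypical`). Every vertex of `T` has two neighbors in `T`, because
it lies on a cycle of length at least three; hence a private neighbor lies outside `T`. A neighbor
`v ∉ T` of `φ i` fails to be private only if it is spoiled: `dᵥ ≥ 2`, or `v` has a neighbor in
`N(T) \ T`. The number of spoiled pairs is at most twice `∑ (dᵥ - 1)⁺` plus twice the number of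
edges inside `N(T) \ T` (`sum_spoiled_le`). If both quantities are below `L k / 400`, fewer than
`k / 24` indices have more than `L / 4` spoiled neighbors; fewer than `k / 24` have more than `4 L`
neighbors outside `T`, and fewer than `k / 24` have less than `L / 2` of them, unless some `k / 24`
indices have an exceptional total. All other indices, at least `7 k / 8` of them, satisfy the
required bounds.

*Probabilistic part* (`bprob_atypical_le`). Each exceptional event has probability at most
`exp (-Ω(L k))` by an exponential moment: the boundary of `T` and the total degrees of `k / 24`
indices are binomial (with a union bound over the at most `2 ^ k` index sets); the excess
`∑ (dᵥ - 1)⁺` is a sum of independent terms (`chernoff_excess`); and once `N(T)` is exposed, the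
number of edges inside `N(T) \ T` is binomial with mean `O((L t)² p)` (`chernoff_two_stage`). The
hypothesis on `p` enters through `L p t = O(n ^ (-2 ε) log n) → 0`, which makes the last two
expectations `o(L k)`.

`G(n,p)` is handled as a random subset of the finite set of potential edges, with explicit finite
sums (`bexp`, `bprob`, `gnpProb_eq`).
-/

open scoped Classical

/-- The number of edges of a graph on `Fin n`. -/
noncomputable def edgeCount {n : ℕ} (G : SimpleGraph (Fin n)) : ℕ := G.edgeFinset.card

/-- The probability of the graph `G` under the Erdős–Rényi `G(n,p)` distribution. -/
noncomputable def gnpWeight (n : ℕ) (p : ℝ) (G : SimpleGraph (Fin n)) : ℝ :=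
  p ^ edgeCount G * (1 - p) ^ (n.choose 2 - edgeCount G)

/-- The probability of an event `A` depending on a `G(n,p)` graph together with two
uniformly random independent maps `φ ψ : Fin k → Fin n`. -/
noncomputable def gnpCfgProb (n k : ℕ) (p : ℝ)
    (A : SimpleGraph (Fin n) → (Fin k → Fin n) → (Fin k → Fin n) → Prop) : ℝ :=
  (∑ G : SimpleGraph (Fin n), ∑ φ : Fin k → Fin n, ∑ ψ : Fin k → Fin n,
      if A G φ ψ then gnpWeight n p G else 0) / (n : ℝ) ^ (2 * k)

/-- `(φ 1, …, φ k, φ 1)` is a simple cycle of `G`: the `φ i` are distinct and consecutive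
vertices (cyclically) are adjacent. -/
def IsCycleSeq {V : Type*} {k : ℕ} (G : SimpleGraph V) (φ : Fin k → V) : Prop :=
  Function.Injective φ ∧ ∀ i : Fin k, G.Adj (φ i) (φ (finRotate k i))

/-- `(φ 1, …, φ k)` is a simple path of `G`: the `φ i` are distinct and consecutive
vertices are adjacent. -/
def IsPathSeq {V : Type*} {k : ℕ} (G : SimpleGraph V) (φ : Fin k → V) : Prop :=
  Function.Injective φ ∧
    ∀ (i : ℕ) (h : i + 1 < k), G.Adj (φ ⟨i, Nat.lt_of_succ_lt h⟩) (φ ⟨i + 1, h⟩)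

/-- A type I configuration: `k ≤ log n`, no confluences (`φ i ≠ ψ i` for all `i`), and both
`(φ 1, …, φ k, φ 1)` and `(ψ 1, …, ψ k, ψ 1)` are simple cycles of `G`. -/
def TypeI {n k : ℕ} (G : SimpleGraph (Fin n)) (φ ψ : Fin k → Fin n) : Prop :=
  (k : ℝ) ≤ Real.log n ∧ (∀ i, φ i ≠ ψ i) ∧ IsCycleSeq G φ ∧ IsCycleSeq G ψ

/-- A type II configuration: `k ≤ log n`, each of `(φ 1, …, φ k)` and `(ψ 1, …, ψ k)` is a
simple path or a simple cycle of `G`, and the first and last indices are the only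
confluences. -/
def TypeII {n k : ℕ} (G : SimpleGraph (Fin n)) (φ ψ : Fin k → Fin n) : Prop :=
  (k : ℝ) ≤ Real.log n ∧ (IsPathSeq G φ ∨ IsCycleSeq G φ) ∧
    (IsPathSeq G ψ ∨ IsCycleSeq G ψ) ∧
    ∀ i : Fin k, (φ i = ψ i ↔ ((i : ℕ) = 0 ∨ (i : ℕ) = k - 1))

/-- The probability of a set `A` of graphs under the `G(n,p)` distribution. -/
noncomputable def gnpProb (n : ℕ) (p : ℝ) (A : Set (SimpleGraph (Fin n))) : ℝ :=
  ∑ G : SimpleGraph (Fin n), if G ∈ A then gnpWeight n p G else 0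

/-- The closed neighborhood `Ñ(S)` of a set of vertices: `S` together with all
neighbors of members of `S`. -/
def closedNbhd {V : Type*} (G : SimpleGraph V) (S : Set V) : Set V :=
  S ∪ {v | ∃ u ∈ S, G.Adj u v}

/-- `U i`: the set of neighbors of `φ i` that have no neighbor in `Ñ(T)` other than `φ i`,
where `T = range φ ∪ range ψ`. -/
def privateNbrs {n k : ℕ} (G : SimpleGraph (Fin n)) (φ ψ : Fin k → Fin n) (i : Fin k) :
    Set (Fin n) :=
  {v | G.Adj (φ i) v ∧
    ∀ w ∈ closedNbhd G (Set.range φ ∪ Set.range ψ), G.Adj v w → w = φ i}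

/-! ### Random subsets of a finite set -/

section Bernoulli

variable {α : Type*}

/-- The expectation of `f S`, where `S` is the random subset of `E` that contains each element
independently with probability `p`. -/
noncomputable def bexp (p : ℝ) (E : Finset α) (f : Finset α → ℝ) : ℝ :=
  ∑ S ∈ E.powerset, p ^ S.card * (1 - p) ^ (E.card - S.card) * f S

/-- The probability that the `p`-random subset `S` of `E` satisfies `P`. -/
noncomputable def bprob (p : ℝ) (E : Finset α) (P : Finset α → Prop) : ℝ :=
  bexp p E fun S => if P S then 1 else 0

lemma bexp_congr {p : ℝ} {E : Finset α} {f g : Finset α → ℝ} (h : ∀ S ⊆ E, f S = g S) :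
    bexp p E f = bexp p E g :=
  Finset.sum_congr rfl fun S hS => by rw [h S (Finset.mem_powerset.1 hS)]

lemma bexp_mono {p : ℝ} (h0 : 0 ≤ p) (h1 : p ≤ 1) {E : Finset α} {f g : Finset α → ℝ}
    (h : ∀ S ⊆ E, f S ≤ g S) : bexp p E f ≤ bexp p E g :=
  Finset.sum_le_sum fun S hS => mul_le_mul_of_nonneg_left (h S (Finset.mem_powerset.1 hS))
    (mul_nonneg (pow_nonneg h0 _) (pow_nonneg (sub_nonneg.2 h1) _))

lemma bexp_add (p : ℝ) (E : Finset α) (f g : Finset α → ℝ) :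
    bexp p E (fun S => f S + g S) = bexp p E f + bexp p E g := by
  simp only [bexp, mul_add, Finset.sum_add_distrib]

lemma bexp_mul_left (p : ℝ) (E : Finset α) (c : ℝ) (f : Finset α → ℝ) :
    bexp p E (fun S => c * f S) = c * bexp p E f := by
  simp only [bexp, Finset.mul_sum]
  exact Finset.sum_congr rfl fun S _ => by ring

lemma bexp_finset_sum (p : ℝ) (E : Finset α) {ι : Type*} (s : Finset ι)
    (f : ι → Finset α → ℝ) :
    bexp p E (fun S => ∑ i ∈ s, f i S) = ∑ i ∈ s, bexp p E (f i) := by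
  simp only [bexp, Finset.mul_sum]
  exact Finset.sum_comm

lemma bexp_pow_card (p y : ℝ) (E : Finset α) :
    bexp p E (fun S => y ^ S.card) = (1 + p * (y - 1)) ^ E.card := by
  have h := Finset.sum_pow_mul_eq_add_pow (p * y) (1 - p) E
  rw [show 1 + p * (y - 1) = p * y + (1 - p) by ring, ← h, bexp]
  exact Finset.sum_congr rfl fun S _ => by rw [mul_pow]; ring

lemma bexp_const (p c : ℝ) (E : Finset α) : bexp p E (fun _ => c) = c := by
  have h := bexp_pow_card p 1 E
  have h' := bexp_mul_left p E c fun S => 1 ^ S.card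
  simp only [one_pow, mul_one] at h h'
  rw [h', h]; simp

lemma bprob_congr {p : ℝ} {E : Finset α} {P Q : Finset α → Prop} (h : ∀ S ⊆ E, (P S ↔ Q S)) :
    bprob p E P = bprob p E Q :=
  bexp_congr fun S hS => if_congr (h S hS) rfl rfl

lemma bprob_mono {p : ℝ} (h0 : 0 ≤ p) (h1 : p ≤ 1) {E : Finset α} {P Q : Finset α → Prop}
    (h : ∀ S ⊆ E, P S → Q S) : bprob p E P ≤ bprob p E Q := by
  refine bexp_mono h0 h1 fun S hS => ?_
  by_cases hP : P S
  · simp [hP, h S hS hP]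
  · simp only [hP, if_false]; split_ifs <;> norm_num

lemma bprob_nonneg {p : ℝ} (h0 : 0 ≤ p) (h1 : p ≤ 1) (E : Finset α) (P : Finset α → Prop) :
    0 ≤ bprob p E P := by
  rw [← bexp_const p 0 E]
  exact bexp_mono h0 h1 fun S _ => by split_ifs <;> norm_num

lemma bprob_or_le {p : ℝ} (h0 : 0 ≤ p) (h1 : p ≤ 1) (E : Finset α) (P Q : Finset α → Prop) :
    bprob p E (fun S => P S ∨ Q S) ≤ bprob p E P + bprob p E Q := by
  unfold bprob
  rw [← bexp_add]
  refine bexp_mono h0 h1 fun S _ => ?_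
  by_cases hP : P S <;> by_cases hQ : Q S <;> simp [hP, hQ]

lemma bprob_exists_le {p : ℝ} (h0 : 0 ≤ p) (h1 : p ≤ 1) (E : Finset α) {ι : Type*}
    (s : Finset ι) (P : ι → Finset α → Prop) :
    bprob p E (fun S => ∃ i ∈ s, P i S) ≤ ∑ i ∈ s, bprob p E (P i) := by
  unfold bprob
  rw [← bexp_finset_sum]
  refine bexp_mono h0 h1 fun S _ => ?_
  have hnn : ∀ i ∈ s, (0 : ℝ) ≤ if P i S then 1 else 0 := fun i _ => by split_ifs <;> norm_num
  split_ifs with h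
  · obtain ⟨i, hi, hP⟩ := h
    have := Finset.single_le_sum hnn hi
    simpa [hP] using this
  · exact Finset.sum_nonneg hnn

/-- Markov's inequality. -/
lemma bprob_le_of_le {p : ℝ} (h0 : 0 ≤ p) (h1 : p ≤ 1) {E : Finset α} {P : Finset α → Prop}
    {f : Finset α → ℝ} {a b : ℝ} (ha : 0 < a) (hf : ∀ S ⊆ E, 0 ≤ f S)
    (hP : ∀ S ⊆ E, P S → a ≤ f S) (hb : bexp p E f ≤ a * b) : bprob p E P ≤ b := by
  have : a * bprob p E P ≤ bexp p E f := by
    unfold bprob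
    rw [← bexp_mul_left]
    refine bexp_mono h0 h1 fun S hS => ?_
    split_ifs with h
    · simpa using hP S hS h
    · simpa using hf S hS
  exact le_of_mul_le_mul_left (this.trans hb) ha

variable [DecidableEq α]

/-- Fubini: the parts of the random set inside and outside `F` are independent. -/
lemma bexp_split (p : ℝ) {E F : Finset α} (hF : F ⊆ E) (f : Finset α → Finset α → ℝ) :
    bexp p E (fun S => f (S ∩ F) (S \ F)) =
      bexp p F fun A => bexp p (E \ F) fun B => f A B := by
  unfold bexp
  simp_rw [Finset.mul_sum]
  rw [← Finset.sum_product']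
  refine Finset.sum_nbij' (fun S => (S ∩ F, S \ F)) (fun x => x.1 ∪ x.2) ?_ ?_ ?_ ?_ ?_
  · intro S hS
    simp only [Finset.mem_product, Finset.mem_powerset] at hS ⊢
    exact ⟨Finset.inter_subset_right, Finset.sdiff_subset_sdiff hS le_rfl⟩
  · intro x hx
    simp only [Finset.mem_product, Finset.mem_powerset] at hx ⊢
    exact Finset.union_subset (hx.1.trans hF) (hx.2.trans Finset.sdiff_subset)
  · intro S _
    ext a
    simp only [Finset.mem_union, Finset.mem_inter, Finset.mem_sdiff]
    tauto
  · rintro ⟨A, B⟩ hx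
    simp only [Finset.mem_product, Finset.mem_powerset, Finset.subset_iff,
      Finset.mem_sdiff] at hx
    ext a
    · simp only [Finset.mem_union, Finset.mem_inter]
      have := @hx.1 a; have := @hx.2 a; tauto
    · simp only [Finset.mem_union, Finset.mem_sdiff]
      have := @hx.1 a; have := @hx.2 a; tauto
  · intro S hS
    rw [Finset.mem_powerset] at hS
    have h1 : (S ∩ F).card + (S \ F).card = S.card := by
      rw [add_comm]; exact Finset.card_sdiff_add_card_inter S F
    have h2 : (E \ F).card + F.card = E.card := Finset.card_sdiff_add_card_eq_card hF
    have h3 : (S ∩ F).card ≤ F.card := Finset.card_le_card Finset.inter_subset_right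
    have h4 : (S \ F).card ≤ (E \ F).card :=
      Finset.card_le_card (Finset.sdiff_subset_sdiff hS le_rfl)
    have h5 : E.card - S.card = (F.card - (S ∩ F).card) + ((E \ F).card - (S \ F).card) := by
      omega
    rw [h5, ← h1, pow_add, pow_add]
    ring

/-- Events determined by the parts of the random set inside and outside `F` are independent. -/
lemma bprob_and_split (p : ℝ) {E F : Finset α} (hF : F ⊆ E) (P Q : Finset α → Prop) :
    bprob p E (fun S => P (S ∩ F) ∧ Q (S \ F)) = bprob p F P * bprob p (E \ F) Q := by
  have h := bexp_split p hF fun A B => (if P A then (1 : ℝ) else 0) * if Q B then 1 else 0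
  simp_rw [bexp_mul_left] at h
  rw [mul_comm]
  unfold bprob
  rw [← bexp_mul_left]
  refine Eq.trans (bexp_congr fun S _ => ?_) (h.trans (bexp_congr fun S _ => mul_comm _ _))
  by_cases h1 : P (S ∩ F) <;> by_cases h2 : Q (S \ F) <;> simp [h1, h2]

/-- A function of the part of the random set inside `F` has the expectation it has for the random
subset of `F`. -/
lemma bexp_inter (p : ℝ) {E F : Finset α} (hF : F ⊆ E) (f : Finset α → ℝ) :
    bexp p E (fun S => f (S ∩ F)) = bexp p F f := by
  rw [bexp_split p hF fun A _ => f A]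
  simp_rw [bexp_const]

/-- Chernoff bound for the upper tail, with the multiplier `2` as the test exponential. -/
lemma chernoff_upper {p : ℝ} (h0 : 0 ≤ p) (h1 : p ≤ 1) {E F : Finset α} (hF : F ⊆ E) (a : ℝ) :
    bprob p E (fun S => a ≤ ((S ∩ F).card : ℝ)) ≤
      Real.exp (p * F.card - a * Real.log 2) := by
  refine bprob_le_of_le h0 h1 (f := fun S => 2 ^ (S ∩ F).card) (Real.exp_pos (a * Real.log 2))
    (fun S _ => by positivity) (fun S _ h => ?_) ?_
  · rw [← Real.rpow_natCast, Real.rpow_def_of_pos two_pos, Real.exp_le_exp, mul_comm]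
    exact mul_le_mul_of_nonneg_left h (Real.log_nonneg (by norm_num))
  · rw [bexp_inter p hF fun S => 2 ^ S.card, bexp_pow_card, ← Real.exp_add]
    calc (1 + p * (2 - 1)) ^ F.card ≤ Real.exp p ^ F.card := by
          gcongr; have := Real.add_one_le_exp p; linarith
      _ = _ := by rw [← Real.exp_nat_mul]; ring_nf

/-- Chernoff bound for the lower tail, with the multiplier `1/2` as the test exponential. -/
lemma chernoff_lower {p : ℝ} (h0 : 0 ≤ p) (h1 : p ≤ 1) {E F : Finset α} (hF : F ⊆ E) (a : ℝ) :
    bprob p E (fun S => ((S ∩ F).card : ℝ) ≤ a) ≤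
      Real.exp (a * Real.log 2 - p * F.card / 2) := by
  refine bprob_le_of_le h0 h1 (f := fun S => (1 / 2) ^ (S ∩ F).card)
    (Real.exp_pos (-(a * Real.log 2))) (fun S _ => by positivity) (fun S _ h => ?_) ?_
  · rw [← Real.rpow_natCast, Real.rpow_def_of_pos (by norm_num), Real.exp_le_exp, one_div,
      Real.log_inv, neg_mul, mul_comm]
    exact neg_le_neg (mul_le_mul_of_nonneg_left h (Real.log_nonneg (by norm_num)))
  · rw [bexp_inter p hF fun S => (1 / 2) ^ S.card, bexp_pow_card, ← Real.exp_add]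
    calc (1 + p * (1 / 2 - 1)) ^ F.card ≤ Real.exp (-p / 2) ^ F.card := by
          refine pow_le_pow_left₀ (by linarith) ?_ _
          have := Real.add_one_le_exp (-p / 2); linarith
      _ = _ := by rw [← Real.exp_nat_mul]; ring_nf

/-- Statistics of disjoint blocks of the random set are independent. -/
lemma bexp_prod (p : ℝ) {ι : Type*} [DecidableEq ι] (O : Finset ι) (F : ι → Finset α)
    (g : ℕ → ℝ) :
    ∀ E : Finset α, (∀ v ∈ O, F v ⊆ E) → (∀ v ∈ O, ∀ w ∈ O, v ≠ w → Disjoint (F v) (F w)) →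
      bexp p E (fun S => ∏ v ∈ O, g (S ∩ F v).card) =
        ∏ v ∈ O, bexp p (F v) fun S => g S.card := by
  induction O using Finset.induction_on with
  | empty => intro E _ _; simp [bexp_const]
  | insert v O hv ih =>
    intro E hE hd
    have hdv : ∀ w ∈ O, Disjoint (F w) (F v) := fun w hw =>
      hd w (Finset.mem_insert_of_mem hw) v (Finset.mem_insert_self _ _)
        (fun h => hv (h ▸ hw))
    rw [Finset.prod_insert hv, ← ih (E \ F v)
      (fun w hw => Finset.subset_sdiff.2 ⟨hE w (Finset.mem_insert_of_mem hw), hdv w hw⟩)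
      (fun a ha b hb => hd a (Finset.mem_insert_of_mem ha) b (Finset.mem_insert_of_mem hb))]
    have h := bexp_split p (hE v (Finset.mem_insert_self _ _))
      fun A B => g A.card * ∏ w ∈ O, g (B ∩ F w).card
    simp_rw [bexp_mul_left] at h
    rw [mul_comm, ← bexp_mul_left]
    refine Eq.trans (bexp_congr fun S _ => ?_) (h.trans (bexp_congr fun S _ => mul_comm _ _))
    rw [Finset.prod_insert hv]
    congr 1
    refine Finset.prod_congr rfl fun w hw => ?_
    congr 2
    ext a
    have hx : a ∈ F w → a ∉ F v := fun h => Finset.disjoint_left.1 (hdv w hw) h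
    simp only [Finset.mem_inter, Finset.mem_sdiff]
    tauto

/-- Upper tail of the total excess `∑ᵥ (dᵥ - 1)⁺`, where `dᵥ` is the number of random elements in
the `v`-th of a family of disjoint blocks of size `t`: since
`2 ^ (d - 1)⁺ = (2 ^ d + 0 ^ d) / 2`, each block contributes at most `cosh (t p)` to the
exponential moment. -/
lemma chernoff_excess {p : ℝ} (h0 : 0 ≤ p) (h1 : p ≤ 1) {ι : Type*} [DecidableEq ι]
    (O : Finset ι) (F : ι → Finset α) (E : Finset α) (hE : ∀ v ∈ O, F v ⊆ E)
    (hd : ∀ v ∈ O, ∀ w ∈ O, v ≠ w → Disjoint (F v) (F w)) (t : ℕ)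
    (ht : ∀ v ∈ O, (F v).card = t) (a : ℝ) :
    bprob p E (fun S => a ≤ ((∑ v ∈ O, ((S ∩ F v).card - 1) : ℕ) : ℝ)) ≤
      Real.exp (O.card * ((t * p) ^ 2 / 2) - a * Real.log 2) := by
  refine bprob_le_of_le h0 h1 (f := fun S => ∏ v ∈ O, (2 : ℝ) ^ ((S ∩ F v).card - 1))
    (Real.exp_pos (a * Real.log 2))
    (fun S _ => Finset.prod_nonneg fun v _ => by positivity) (fun S _ h => ?_) ?_
  · rw [Finset.prod_pow_eq_pow_sum, ← Real.rpow_natCast, Real.rpow_def_of_pos two_pos,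
      Real.exp_le_exp, mul_comm]
    exact mul_le_mul_of_nonneg_left h (Real.log_nonneg (by norm_num))
  · rw [bexp_prod p O F (fun d => 2 ^ (d - 1)) E hE hd, ← Real.exp_add]
    have hone : ∀ v ∈ O, bexp p (F v) (fun S => (2 : ℝ) ^ (S.card - 1)) ≤
        Real.exp ((t * p) ^ 2 / 2) := by
      intro v hv
      have hrw : bexp p (F v) (fun S => (2 : ℝ) ^ (S.card - 1)) =
          bexp p (F v) (fun S => 1 / 2 * 2 ^ S.card + 1 / 2 * 0 ^ S.card) := by
        refine bexp_congr fun S _ => ?_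
        rcases S.card with _ | d
        · norm_num
        · rw [Nat.add_sub_cancel, pow_succ, zero_pow (Nat.succ_ne_zero d)]; ring
      rw [hrw, bexp_add, bexp_mul_left, bexp_mul_left, bexp_pow_card, bexp_pow_card, ht v hv]
      refine le_trans ?_ (Real.cosh_le_exp_half_sq _)
      rw [Real.cosh_eq]
      have e1 : (1 + p * (2 - 1)) ^ t ≤ Real.exp (t * p) := by
        rw [Real.exp_nat_mul]
        gcongr; have := Real.add_one_le_exp p; linarith
      have e2 : (1 + p * (0 - 1)) ^ t ≤ Real.exp (-(t * p)) := by
        rw [← mul_neg, Real.exp_nat_mul]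
        refine pow_le_pow_left₀ (by linarith) ?_ _
        have := Real.add_one_le_exp (-p); linarith
      generalize (1 + p * (2 - 1)) ^ t = x at e1 ⊢
      generalize (1 + p * (0 - 1)) ^ t = y at e2 ⊢
      linarith
    calc _ ≤ ∏ v ∈ O, Real.exp ((t * p) ^ 2 / 2) := by
          refine Finset.prod_le_prod (fun v _ => ?_) hone
          rw [← bexp_const p 0 (F v)]
          exact bexp_mono h0 h1 fun S _ => by positivity
      _ = _ := by rw [Finset.prod_const, ← Real.exp_nat_mul]; ring_nf

/-- Two-stage exposure: `N` is determined by the part of the random set inside `F`, and given `N`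
the number of random elements of `K N`, which is disjoint from `F`, is binomial. -/
lemma chernoff_two_stage {p : ℝ} (h0 : 0 ≤ p) (h1 : p ≤ 1) {β : Type*}
    {E F : Finset α} (hF : F ⊆ E) (N : Finset α → Finset β) (K : Finset β → Finset α)
    (hN : ∀ S ⊆ E, N S = N (S ∩ F)) (hK : ∀ S ⊆ F, K (N S) ⊆ E \ F) (M a b : ℝ)
    (hcard : ∀ S ⊆ F, ((N S).card : ℝ) ≤ M → ((K (N S)).card : ℝ) ≤ b) :
    bprob p E (fun S => ((N S).card : ℝ) ≤ M ∧ a ≤ ((S ∩ K (N S)).card : ℝ)) ≤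
      Real.exp (p * b - a * Real.log 2) := by
  have h := bexp_split p hF fun A B =>
    if ((N A).card : ℝ) ≤ M ∧ a ≤ ((B ∩ K (N A)).card : ℝ) then (1 : ℝ) else 0
  have h2 : bprob p E (fun S => ((N S).card : ℝ) ≤ M ∧ a ≤ ((S ∩ K (N S)).card : ℝ)) =
      bexp p E fun S => if ((N (S ∩ F)).card : ℝ) ≤ M ∧
        a ≤ (((S \ F) ∩ K (N (S ∩ F))).card : ℝ) then (1 : ℝ) else 0 := by
    refine bexp_congr fun S hS => ?_
    have : (S \ F) ∩ K (N (S ∩ F)) = S ∩ K (N S) := by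
      rw [hN S hS]
      ext x
      have hx : x ∈ K (N (S ∩ F)) → x ∈ E \ F := fun h => hK (S ∩ F) Finset.inter_subset_right h
      simp only [Finset.mem_inter, Finset.mem_sdiff] at hx ⊢
      tauto
    rw [← hN S hS] at this
    simp only [← hN S hS, this]
    congr
  rw [h2, h, ← bexp_const p (Real.exp (p * b - a * Real.log 2)) F]
  refine bexp_mono h0 h1 fun A hA => ?_
  by_cases hM : ((N A).card : ℝ) ≤ M
  · simp only [hM, true_and]
    refine (chernoff_upper h0 h1 (hK A hA) a).trans (Real.exp_le_exp.2 ?_)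
    have := mul_le_mul_of_nonneg_left (hcard A hA hM) h0
    linarith
  · simp only [hM, false_and, if_false, bexp_const]
    exact (Real.exp_pos _).le

end Bernoulli

/-! ### Potential edges and the random graph -/

section Edges

variable {n : ℕ}

/-- All `n.choose 2` potential edges on `Fin n`. -/
def allPairs (n : ℕ) : Finset (Sym2 (Fin n)) := Finset.univ.filter fun e => ¬ e.IsDiag

/-- The potential edges between `J` and `O`. -/
def cross (J O : Finset (Fin n)) : Finset (Sym2 (Fin n)) :=
  (J ×ˢ O).image fun x => s(x.1, x.2)

/-- The potential edges between the vertex `v` and `T`. -/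
def starTo (T : Finset (Fin n)) (v : Fin n) : Finset (Sym2 (Fin n)) := T.image fun u => s(u, v)

/-- The potential edges inside `N`. -/
def pairs (N : Finset (Fin n)) : Finset (Sym2 (Fin n)) :=
  N.offDiag.image fun x => s(x.1, x.2)

/-- The vertices outside `T` joined to `T` by an edge of `S`. -/
def outerNbrs (T : Finset (Fin n)) (S : Finset (Sym2 (Fin n))) : Finset (Fin n) :=
  Tᶜ.filter fun v => ∃ u ∈ T, s(u, v) ∈ S

lemma card_inter_cross (S : Finset (Sym2 (Fin n))) {J O : Finset (Fin n)} (h : Disjoint J O) :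
    (S ∩ cross J O).card = ∑ u ∈ J, (O.filter fun v => s(u, v) ∈ S).card := by
  have h1 : S ∩ cross J O = ((J ×ˢ O).filter fun x => s(x.1, x.2) ∈ S).image
      fun x => s(x.1, x.2) := by
    ext e
    simp only [cross, Finset.mem_inter, Finset.mem_image, Finset.mem_filter]
    constructor
    · rintro ⟨he, x, hx, rfl⟩; exact ⟨x, ⟨hx, he⟩, rfl⟩
    · rintro ⟨x, ⟨hx, he⟩, rfl⟩; exact ⟨he, x, hx, rfl⟩
  rw [h1, Finset.card_image_of_injOn, Finset.card_filter, Finset.sum_product]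
  · simp_rw [Finset.card_filter]
  · rintro ⟨a, b⟩ hab ⟨c, d⟩ hcd he
    simp only [Finset.coe_filter, Finset.mem_product, Set.mem_ofPred_eq] at hab hcd
    rcases Sym2.eq_iff.1 he with ⟨h1, h2⟩ | ⟨h1, h2⟩
    · exact Prod.ext h1 h2
    · dsimp only at h1 h2
      exact absurd hcd.1.2 (h1 ▸ Finset.disjoint_left.1 h hab.1.1)

lemma card_inter_starTo (S : Finset (Sym2 (Fin n))) (T : Finset (Fin n)) (v : Fin n) :
    (S ∩ starTo T v).card = (T.filter fun u => s(u, v) ∈ S).card := by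
  have h1 : S ∩ starTo T v = (T.filter fun u => s(u, v) ∈ S).image fun u => s(u, v) := by
    ext e
    simp only [starTo, Finset.mem_inter, Finset.mem_image, Finset.mem_filter]
    constructor
    · rintro ⟨he, x, hx, rfl⟩; exact ⟨x, ⟨hx, he⟩, rfl⟩
    · rintro ⟨x, ⟨hx, he⟩, rfl⟩; exact ⟨he, x, hx, rfl⟩
  rw [h1, Finset.card_image_of_injective]
  intro a b h
  exact Sym2.congr_left.1 h

lemma card_cross {J O : Finset (Fin n)} (h : Disjoint J O) :
    (cross J O).card = J.card * O.card := by
  have := card_inter_cross Finset.univ h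
  simpa using this

lemma card_starTo (T : Finset (Fin n)) (v : Fin n) : (starTo T v).card = T.card := by
  have := card_inter_starTo Finset.univ T v
  simpa using this

lemma card_pairs_le (N : Finset (Fin n)) : (pairs N).card ≤ N.card * N.card :=
  Finset.card_image_le.trans (by rw [Finset.offDiag_card]; exact Nat.sub_le _ _)

lemma mem_pairs {N : Finset (Fin n)} {a b : Fin n} :
    s(a, b) ∈ pairs N ↔ a ∈ N ∧ b ∈ N ∧ a ≠ b := by
  simp only [pairs, Finset.mem_image, Finset.mem_offDiag, Prod.exists]
  constructor
  · rintro ⟨x, y, ⟨hx, hy, hxy⟩, h⟩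
    rcases Sym2.eq_iff.1 h with ⟨rfl, rfl⟩ | ⟨rfl, rfl⟩
    · exact ⟨hx, hy, hxy⟩
    · exact ⟨hy, hx, hxy.symm⟩
  · rintro ⟨ha, hb, hab⟩; exact ⟨a, b, ⟨ha, hb, hab⟩, rfl⟩

lemma mem_cross {J O : Finset (Fin n)} {a b : Fin n} :
    s(a, b) ∈ cross J O ↔ (a ∈ J ∧ b ∈ O) ∨ (b ∈ J ∧ a ∈ O) := by
  simp only [cross, Finset.mem_image, Finset.mem_product, Prod.exists]
  constructor
  · rintro ⟨x, y, ⟨hx, hy⟩, h⟩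
    rcases Sym2.eq_iff.1 h with ⟨rfl, rfl⟩ | ⟨rfl, rfl⟩
    · exact Or.inl ⟨hx, hy⟩
    · exact Or.inr ⟨hx, hy⟩
  · rintro (⟨ha, hb⟩ | ⟨ha, hb⟩)
    · exact ⟨a, b, ⟨ha, hb⟩, rfl⟩
    · exact ⟨b, a, ⟨ha, hb⟩, Sym2.eq_swap⟩

lemma mem_allPairs {a b : Fin n} : s(a, b) ∈ allPairs n ↔ a ≠ b := by
  simp [allPairs]

lemma pairs_subset_allPairs (N : Finset (Fin n)) : pairs N ⊆ allPairs n := by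
  intro e
  induction e using Sym2.ind with
  | _ a b => rw [mem_pairs, mem_allPairs]; exact fun h => h.2.2

lemma cross_subset {T J : Finset (Fin n)} (hJ : J ⊆ T) :
    cross J Tᶜ ⊆ allPairs n \ pairs T := by
  intro e
  induction e using Sym2.ind with
  | _ a b =>
    rw [mem_cross, Finset.mem_sdiff, mem_allPairs, mem_pairs, Finset.mem_compl, Finset.mem_compl]
    rintro (⟨ha, hb⟩ | ⟨hb, ha⟩)
    · exact ⟨fun h => hb (h ▸ hJ ha), fun h => hb h.2.1⟩
    · exact ⟨fun h => ha (h ▸ hJ hb), fun h => ha h.1⟩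

lemma starTo_subset_cross {T : Finset (Fin n)} {v : Fin n} (hv : v ∈ Tᶜ) :
    starTo T v ⊆ cross T Tᶜ := by
  intro e he
  obtain ⟨u, hu, rfl⟩ := Finset.mem_image.1 he
  exact mem_cross.2 (Or.inl ⟨hu, hv⟩)

lemma starTo_disjoint {T : Finset (Fin n)} {v w : Fin n} (hv : v ∈ Tᶜ) (h : v ≠ w) :
    Disjoint (starTo T v) (starTo T w) := by
  rw [Finset.disjoint_left]
  intro e he he'
  obtain ⟨a, ha, rfl⟩ := Finset.mem_image.1 he
  obtain ⟨b, hb, hab⟩ := Finset.mem_image.1 he'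
  rcases Sym2.eq_iff.1 hab with ⟨_, h2⟩ | ⟨h1, _⟩
  · exact h h2.symm
  · exact Finset.mem_compl.1 hv (h1 ▸ hb)

lemma pairs_subset {T N : Finset (Fin n)} (hN : N ⊆ Tᶜ) :
    pairs N ⊆ (allPairs n \ pairs T) \ cross T Tᶜ := by
  intro e
  induction e using Sym2.ind with
  | _ a b =>
    simp only [mem_cross, Finset.mem_sdiff, mem_allPairs, mem_pairs]
    rintro ⟨ha, hb, hab⟩
    have := Finset.mem_compl.1 (hN ha)
    have := Finset.mem_compl.1 (hN hb)
    tauto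

lemma outerNbrs_subset (T : Finset (Fin n)) (S : Finset (Sym2 (Fin n))) :
    outerNbrs T S ⊆ Tᶜ := Finset.filter_subset _ _

/-- `outerNbrs T S` depends only on the edges of `S` between `T` and its complement. -/
lemma outerNbrs_congr {T : Finset (Fin n)} {S S' : Finset (Sym2 (Fin n))}
    (h : S ∩ cross T Tᶜ = S' ∩ cross T Tᶜ) : outerNbrs T S = outerNbrs T S' := by
  refine Finset.filter_congr fun v hv => exists_congr fun u => and_congr_right fun hu => ?_
  have hm : s(u, v) ∈ cross T Tᶜ := mem_cross.2 (Or.inl ⟨hu, hv⟩)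
  have := congrArg (s(u, v) ∈ ·) h
  simpa [hm] using this

lemma card_outerNbrs_le (T : Finset (Fin n)) (S : Finset (Sym2 (Fin n))) :
    (outerNbrs T S).card ≤ (S ∩ cross T Tᶜ).card := by
  rw [card_inter_cross S disjoint_compl_right]
  have : outerNbrs T S ⊆ T.biUnion fun u => Tᶜ.filter fun v => s(u, v) ∈ S := by
    intro v hv
    obtain ⟨hv, u, hu, h⟩ := Finset.mem_filter.1 hv
    exact Finset.mem_biUnion.2 ⟨u, hu, Finset.mem_filter.2 ⟨hv, h⟩⟩
  exact (Finset.card_le_card this).trans Finset.card_biUnion_le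

lemma edgeFinset_eq_of_edgeSet_eq {V : Type*} {G : SimpleGraph V} (inst : Fintype G.edgeSet)
    (S : Finset (Sym2 V)) (h : G.edgeSet = S) : G.edgeFinset = S := by
  ext e
  rw [SimpleGraph.mem_edgeFinset, h, Finset.mem_coe]

/-- `G(n,p)` is the `p`-random set of potential edges. -/
lemma gnpProb_eq (p : ℝ) (A : Set (SimpleGraph (Fin n))) :
    gnpProb n p A =
      bprob p (allPairs n) fun S => SimpleGraph.fromEdgeSet (S : Set (Sym2 (Fin n))) ∈ A := by
  have hcard : (allPairs n).card = n.choose 2 := by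
    have h := SimpleGraph.card_edgeFinset_top_eq_card_choose_two (V := Fin n)
    rw [Fintype.card_fin] at h
    rw [← h]
    congr 1
    ext e
    simp [allPairs]
  unfold gnpProb bprob bexp
  refine Finset.sum_nbij' (fun G => G.edgeFinset)
    (fun S => SimpleGraph.fromEdgeSet (S : Set (Sym2 (Fin n)))) ?_ ?_ ?_ ?_ ?_
  · intro G _
    rw [Finset.mem_powerset]
    intro e he
    have := G.not_isDiag_of_mem_edgeSet (SimpleGraph.mem_edgeFinset.1 he)
    simpa [allPairs] using this
  · intro S _; exact Finset.mem_univ _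
  · intro G _
    simp
  · intro S hS
    rw [Finset.mem_powerset] at hS
    refine edgeFinset_eq_of_edgeSet_eq _ _ ?_
    rw [SimpleGraph.edgeSet_fromEdgeSet]
    ext e
    constructor
    · exact fun h => h.1
    · intro h
      have := hS h
      simp only [allPairs, Finset.mem_filter] at this
      exact ⟨h, this.2⟩
  · intro G _
    simp only [SimpleGraph.coe_edgeFinset, SimpleGraph.fromEdgeSet_edgeSet, hcard]
    split_ifs
    · rw [mul_one]; rfl
    · rw [mul_zero]

end Edges

/-! ### The deterministic part -/

section Deterministic

/-- On a simple cycle of length at least three every vertex has two distinct neighbors, so none of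
them has a unique neighbor on the cycle. -/
lemma IsCycleSeq.exists_two_adj {V : Type*} {k : ℕ} {G : SimpleGraph V} {φ : Fin k → V}
    (hk : 3 ≤ k) (h : IsCycleSeq G φ) (j : Fin k) :
    ∃ a b : Fin k, φ a ≠ φ b ∧ G.Adj (φ j) (φ a) ∧ G.Adj (φ j) (φ b) := by
  obtain ⟨m, rfl⟩ : ∃ m, k = m + 3 := ⟨k - 3, by omega⟩
  refine ⟨finRotate _ j, (finRotate _).symm j, fun he => ?_, h.2 j, ?_⟩
  · have h1 : finRotate (m + 3) (finRotate (m + 3) j) = j := by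
      have := congrArg (finRotate (m + 3)) (h.1 he)
      rwa [Equiv.apply_symm_apply] at this
    rw [finRotate_apply, finRotate_apply, add_assoc] at h1
    have h2 : (1 + 1 : Fin (m + 3)) = 0 := by simpa using h1
    have h3 := congrArg Fin.val h2
    simp [Fin.val_add, Nat.mod_eq_of_lt] at h3
  · have := h.2 ((finRotate _).symm j)
    rw [Equiv.apply_symm_apply] at this
    exact this.symm

variable {n k : ℕ}

/-- The private neighbors of `φ i` lie outside `T`: a vertex of `T` has two neighbors in `T`. -/
lemma privateNbrs_subset {G : SimpleGraph (Fin n)} {φ ψ : Fin k → Fin n} (hk : 3 ≤ k)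
    (hG : TypeI G φ ψ) (i : Fin k) {v : Fin n} (hv : v ∈ privateNbrs G φ ψ i) :
    v ∉ Set.range φ ∪ Set.range ψ := by
  rintro (⟨j, rfl⟩ | ⟨j, rfl⟩)
  · obtain ⟨a, b, hab, ha, hb⟩ := hG.2.2.1.exists_two_adj hk j
    exact hab ((hv.2 _ (Or.inl (Or.inl ⟨a, rfl⟩)) ha).trans
      (hv.2 _ (Or.inl (Or.inl ⟨b, rfl⟩)) hb).symm)
  · obtain ⟨a, b, hab, ha, hb⟩ := hG.2.2.2.exists_two_adj hk j
    exact hab ((hv.2 _ (Or.inl (Or.inr ⟨a, rfl⟩)) ha).trans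
      (hv.2 _ (Or.inl (Or.inr ⟨b, rfl⟩)) hb).symm)

/-- The neighbors `v` of `u` outside `T` that are spoiled: `v` has a second neighbor in `T`, or a
neighbor in `N(T) \ T`. -/
noncomputable def spoiled (T : Finset (Fin n)) (S : Finset (Sym2 (Fin n))) (u : Fin n) :
    Finset (Fin n) :=
  Tᶜ.filter fun v => s(u, v) ∈ S ∧
    (2 ≤ (S ∩ starTo T v).card ∨ ∃ w ∈ outerNbrs T S, s(v, w) ∈ S)

/-- A spoiled pair is charged either to the excess `dᵥ - 1` (as `dᵥ ≤ 2 (dᵥ - 1)` when `dᵥ ≥ 2`) or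
to an endpoint of an edge inside `N(T) \ T`. -/
lemma sum_spoiled_le (T : Finset (Fin n)) {S : Finset (Sym2 (Fin n))} (hS : S ⊆ allPairs n) :
    ∑ u ∈ T, (spoiled T S u).card ≤ 2 * ∑ v ∈ Tᶜ, ((S ∩ starTo T v).card - 1) +
      2 * (S ∩ pairs (outerNbrs T S)).card := by
  set N := outerNbrs T S
  let W := N.filter fun v => ∃ w ∈ N, s(v, w) ∈ S
  have hW : W.card ≤ 2 * (S ∩ pairs N).card := by
    have hsub : W ⊆ (S ∩ pairs N).biUnion Sym2.toFinset := by
      intro v hv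
      obtain ⟨hvN, w, hw, hvw⟩ := Finset.mem_filter.1 hv
      refine Finset.mem_biUnion.2 ⟨s(v, w), Finset.mem_inter.2 ⟨hvw, mem_pairs.2
        ⟨hvN, hw, mem_allPairs.1 (hS hvw)⟩⟩, ?_⟩
      simp
    refine (Finset.card_le_card hsub).trans ?_
    rw [mul_comm]
    refine Finset.card_biUnion_le_card_mul _ _ _ fun e _ => ?_
    rw [Sym2.card_toFinset]; split_ifs <;> norm_num
  have h1 : ∑ u ∈ T, (spoiled T S u).card = ∑ v ∈ Tᶜ,
      if 2 ≤ (S ∩ starTo T v).card ∨ ∃ w ∈ N, s(v, w) ∈ S then (S ∩ starTo T v).card else 0 := by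
    simp_rw [spoiled, Finset.card_filter]
    rw [Finset.sum_comm]
    refine Finset.sum_congr rfl fun v _ => ?_
    split_ifs with h
    · refine Eq.trans (Finset.sum_congr rfl fun u _ => ?_)
        ((card_inter_starTo S T v).trans (Finset.card_filter _ _)).symm
      simp only [N] at h
      simp only [h, and_true]
    · exact Finset.sum_eq_zero fun u _ => by simp only [N] at h; simp only [h, and_false, if_false]
  have h2 : W.card = ∑ v ∈ Tᶜ, if v ∈ W then 1 else 0 := by
    rw [← Finset.card_filter]
    congr 1
    ext v
    simp only [Finset.mem_filter]
    exact ⟨fun h => ⟨outerNbrs_subset T S (Finset.mem_filter.1 h).1, h⟩, fun h => h.2⟩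
  rw [h1]
  refine le_trans ?_ (add_le_add_right hW _)
  rw [h2, Finset.mul_sum, ← Finset.sum_add_distrib]
  refine Finset.sum_le_sum fun v hv => ?_
  split_ifs with h h' h'
  · omega
  · rcases Nat.lt_or_ge (S ∩ starTo T v).card 2 with hlt | hge
    · rcases Nat.eq_zero_or_pos (S ∩ starTo T v).card with h0 | h0
      · omega
      · exfalso
        rw [card_inter_starTo] at h0
        obtain ⟨u, hu⟩ := Finset.card_pos.1 h0
        have hvN : v ∈ N := Finset.mem_filter.2 ⟨hv, u, Finset.mem_filter.1 hu⟩
        rcases h with h | h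
        · omega
        · exact h' (Finset.mem_filter.2 ⟨hvN, h⟩)
    · omega
  · omega
  · omega

/-- Every neighbor of `φ i` outside `T` is either spoiled or private. -/
lemma card_outer_le {G : SimpleGraph (Fin n)} {S : Finset (Sym2 (Fin n))}
    (hGS : ∀ u v, G.Adj u v ↔ s(u, v) ∈ S) {φ ψ : Fin k → Fin n} {T : Finset (Fin n)}
    (hT : (T : Set (Fin n)) = Set.range φ ∪ Set.range ψ) (i : Fin k) :
    (Tᶜ.filter fun v => s(φ i, v) ∈ S).card ≤
      (spoiled T S (φ i)).card + (privateNbrs G φ ψ i).ncard := by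
  rw [Set.ncard_eq_toFinset_card']
  refine le_trans (Finset.card_le_card ?_) (Finset.card_union_le _ _)
  intro v hv
  obtain ⟨hvT, hiv⟩ := Finset.mem_filter.1 hv
  have hi : φ i ∈ T := by
    rw [← Finset.mem_coe, hT]; exact Or.inl ⟨i, rfl⟩
  rw [Finset.mem_union, Set.mem_toFinset]
  by_contra hcon
  rw [not_or] at hcon
  refine hcon.2 ⟨(hGS _ _).2 hiv, ?_⟩
  rw [← hT]
  intro w hw hvw
  have hns : ¬ (2 ≤ (S ∩ starTo T v).card ∨ ∃ w ∈ outerNbrs T S, s(v, w) ∈ S) := fun h =>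
    hcon.1 (Finset.mem_filter.2 ⟨hvT, hiv, h⟩)
  rw [not_or] at hns
  by_cases hwT : w ∈ T
  · have hle : (T.filter fun u => s(u, v) ∈ S).card ≤ 1 := by
      rw [← card_inter_starTo]; omega
    exact Finset.card_le_one.1 hle w
      (Finset.mem_filter.2 ⟨hwT, (hGS _ _).1 hvw.symm⟩) (φ i) (Finset.mem_filter.2 ⟨hi, hiv⟩)
  · exfalso
    rcases hw with hw | ⟨u, hu, huw⟩
    · exact hwT hw
    · exact hns.2 ⟨w, Finset.mem_filter.2 ⟨Finset.mem_compl.2 hwT, u, hu, (hGS _ _).1 huw⟩,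
        (hGS _ _).1 hvw⟩

/-- The exceptional event for the edges leaving `T`, where `L` stands for `np`: the edge boundary
of `T` is too large, some `k/24` of the vertices `φ i` have together far too many or far too few
neighbors outside `T`, or there are too many spoiled neighbors, coming from vertices with several
neighbors in `T` or from edges inside `N(T) \ T`. -/
def Atypical (φ : Fin k → Fin n) (T : Finset (Fin n)) (L : ℝ) (S : Finset (Sym2 (Fin n))) :
    Prop :=
  7 / 4 * L * T.card ≤ ((S ∩ cross T Tᶜ).card : ℝ) ∨
  (∃ I ∈ Finset.univ.filter (fun I : Finset (Fin k) => k ≤ 24 * I.card),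
    4 * L * I.card ≤ ((S ∩ cross (I.image φ) Tᶜ).card : ℝ)) ∨
  (∃ I ∈ Finset.univ.filter (fun I : Finset (Fin k) => k ≤ 24 * I.card),
    ((S ∩ cross (I.image φ) Tᶜ).card : ℝ) ≤ L * I.card / 2) ∨
  L * k / 400 ≤ ((∑ v ∈ Tᶜ, ((S ∩ starTo T v).card - 1) : ℕ) : ℝ) ∨
  (((outerNbrs T S).card : ℝ) ≤ 2 * L * T.card ∧
    L * k / 400 ≤ ((S ∩ pairs (outerNbrs T S)).card : ℝ))

/-- Outside the exceptional event both conclusions hold. Spoiled neighbors can be numerous for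
fewer than `k / 24` indices since `2 (L k / 400) + 2 (L k / 400) = (L / 4) (k / 25)`. -/
lemma good_of_not_atypical {G : SimpleGraph (Fin n)} {S : Finset (Sym2 (Fin n))}
    (hS : S ⊆ allPairs n) (hGS : ∀ u v, G.Adj u v ↔ s(u, v) ∈ S) {φ ψ : Fin k → Fin n}
    (hk : 3 ≤ k) (hG : TypeI G φ ψ) {T : Finset (Fin n)}
    (hT : (T : Set (Fin n)) = Set.range φ ∪ Set.range ψ) {L : ℝ} (hL : 4 ≤ L)
    (hA : ¬ Atypical φ T L S) :
    ((closedNbhd G (Set.range φ ∪ Set.range ψ)).ncard : ℝ) < 2 * L * T.card ∧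
      7 * (k : ℝ) / 8 ≤ ((Finset.univ.filter fun i : Fin k =>
        L / 4 ≤ ((privateNbrs G φ ψ i).ncard : ℝ) ∧
          ((privateNbrs G φ ψ i).ncard : ℝ) ≤ 4 * L).card : ℝ) := by
  simp only [Atypical, not_or, not_exists, not_and, not_le, Finset.mem_filter, Finset.mem_univ,
    true_and] at hA
  obtain ⟨hX, hup, hlo, hC, hD⟩ := hA
  have hφ : Function.Injective φ := hG.2.2.1.1
  have hφT : ∀ i, φ i ∈ T := fun i => by
    rw [← Finset.mem_coe, hT]; exact Or.inl ⟨i, rfl⟩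
  have hkR : (3 : ℝ) ≤ k := by exact_mod_cast hk
  have hTk : (1 : ℝ) ≤ T.card := by
    exact_mod_cast Finset.card_pos.2 ⟨_, hφT ⟨0, by omega⟩⟩
  constructor
  · have hsub : closedNbhd G (Set.range φ ∪ Set.range ψ) ⊆ ((T ∪ outerNbrs T S : Finset _) : Set _) := by
      rw [← hT]
      rintro v (hv | ⟨u, hu, huv⟩)
      · exact Finset.mem_union_left _ hv
      · by_cases hvT : v ∈ T
        · exact Finset.mem_union_left _ hvT
        · exact Finset.mem_union_right _
            (Finset.mem_filter.2 ⟨Finset.mem_compl.2 hvT, u, hu, (hGS _ _).1 huv⟩)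
    have h1 := Set.ncard_le_ncard hsub
    rw [Set.ncard_coe_finset] at h1
    have h2 : (closedNbhd G (Set.range φ ∪ Set.range ψ)).ncard ≤
        T.card + (S ∩ cross T Tᶜ).card :=
      h1.trans ((Finset.card_union_le _ _).trans
        (Nat.add_le_add_left (card_outerNbrs_le T S) _))
    have h3 : ((closedNbhd G (Set.range φ ∪ Set.range ψ)).ncard : ℝ) ≤
        T.card + (S ∩ cross T Tᶜ).card := by exact_mod_cast h2
    nlinarith
  have hDN : ((S ∩ pairs (outerNbrs T S)).card : ℝ) < L * k / 400 := by
    refine hD ?_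
    have : ((outerNbrs T S).card : ℝ) ≤ (S ∩ cross T Tᶜ).card := by
      exact_mod_cast card_outerNbrs_le T S
    nlinarith
  let D : Fin k → ℕ := fun i => (Tᶜ.filter fun v => s(φ i, v) ∈ S).card
  let U : Fin k → ℕ := fun i => (privateNbrs G φ ψ i).ncard
  have hsum : ∀ I : Finset (Fin k), (S ∩ cross (I.image φ) Tᶜ).card = ∑ i ∈ I, D i := by
    intro I
    rw [card_inter_cross, Finset.sum_image fun a _ b _ h => hφ h]
    rw [Finset.disjoint_left]
    intro a ha
    obtain ⟨i, _, rfl⟩ := Finset.mem_image.1 ha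
    simpa using hφT i
  have hUD : ∀ i, U i ≤ D i := by
    intro i
    have hsub : privateNbrs G φ ψ i ⊆ ((Tᶜ.filter fun v => s(φ i, v) ∈ S : Finset _) : Set _) := by
      intro v hv
      have := privateNbrs_subset hk hG i hv
      rw [← hT] at this
      exact Finset.mem_filter.2 ⟨Finset.mem_compl.2 this, (hGS _ _).1 hv.1⟩
    have h1 := Set.ncard_le_ncard hsub
    rwa [Set.ncard_coe_finset] at h1
  -- The indices with too many outer neighbors, too few of them, or too many spoiled ones.
  let I₁ := Finset.univ.filter fun i : Fin k => 4 * L < (D i : ℝ)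
  let I₂ := Finset.univ.filter fun i : Fin k => (D i : ℝ) < L / 2
  let I₃ := Finset.univ.filter fun i : Fin k => L / 4 < ((spoiled T S (φ i)).card : ℝ)
  have h1 : 24 * I₁.card < k := by
    by_contra hcon
    have h := hup I₁ (not_lt.1 hcon)
    rw [hsum, Nat.cast_sum] at h
    have := Finset.card_nsmul_le_sum I₁ (fun i => (D i : ℝ)) (4 * L)
      fun i hi => (Finset.mem_filter.1 hi).2.le
    rw [nsmul_eq_mul] at this
    linarith
  have h2 : 24 * I₂.card < k := by
    by_contra hcon
    have h := hlo I₂ (not_lt.1 hcon)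
    rw [hsum, Nat.cast_sum] at h
    have := Finset.sum_le_card_nsmul I₂ (fun i => (D i : ℝ)) (L / 2)
      fun i hi => (Finset.mem_filter.1 hi).2.le
    rw [nsmul_eq_mul] at this
    linarith
  have h3 : 24 * I₃.card < k := by
    have ha := Finset.card_nsmul_le_sum I₃ (fun i => ((spoiled T S (φ i)).card : ℝ)) (L / 4)
      fun i hi => (Finset.mem_filter.1 hi).2.le
    rw [nsmul_eq_mul] at ha
    have hb : ∑ i ∈ I₃, (spoiled T S (φ i)).card ≤ ∑ u ∈ T, (spoiled T S u).card := by
      rw [← Finset.sum_image (s := I₃) (g := φ) (f := fun u => (spoiled T S u).card)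
        fun a _ b _ h => hφ h]
      refine Finset.sum_le_sum_of_subset fun u hu => ?_
      obtain ⟨i, _, rfl⟩ := Finset.mem_image.1 hu
      exact hφT i
    have hc := hb.trans (sum_spoiled_le T hS)
    have hd : ∑ i ∈ I₃, ((spoiled T S (φ i)).card : ℝ) ≤
        2 * ((∑ v ∈ Tᶜ, ((S ∩ starTo T v).card - 1) : ℕ) : ℝ) +
          2 * ((S ∩ pairs (outerNbrs T S)).card : ℝ) := by exact_mod_cast hc
    have he : (I₃.card : ℝ) * L < k / 25 * L := by linarith
    have hf := lt_of_mul_lt_mul_right he (by linarith)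
    have hg : (24 : ℝ) * I₃.card < k := by linarith
    exact_mod_cast hg
  have hcover : (Finset.univ : Finset (Fin k)) ⊆ (Finset.univ.filter fun i : Fin k =>
      L / 4 ≤ (U i : ℝ) ∧ (U i : ℝ) ≤ 4 * L) ∪ (I₁ ∪ (I₂ ∪ I₃)) := by
    intro i _
    simp only [Finset.mem_union, Finset.mem_filter, Finset.mem_univ, true_and, I₁, I₂, I₃]
    by_contra hcon
    simp only [not_or, not_lt] at hcon
    obtain ⟨hg, ha, hb, hc⟩ := hcon
    have hu : (U i : ℝ) ≤ D i := by exact_mod_cast hUD i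
    have hd : (D i : ℝ) ≤ (spoiled T S (φ i)).card + U i := by
      exact_mod_cast card_outer_le hGS hT i
    exact hg ⟨by linarith, by linarith⟩
  have hcard := Finset.card_le_card hcover
  rw [Finset.card_univ, Fintype.card_fin] at hcard
  have e1 := Finset.card_union_le (Finset.univ.filter fun i : Fin k =>
      L / 4 ≤ (U i : ℝ) ∧ (U i : ℝ) ≤ 4 * L) (I₁ ∪ (I₂ ∪ I₃))
  have e2 := Finset.card_union_le I₁ (I₂ ∪ I₃)
  have e3 := Finset.card_union_le I₂ I₃
  have e4 : 7 * k ≤ 8 * (Finset.univ.filter fun i : Fin k =>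
      L / 4 ≤ (U i : ℝ) ∧ (U i : ℝ) ≤ 4 * L).card := by omega
  have e5 : 7 * (k : ℝ) ≤ 8 * ((Finset.univ.filter fun i : Fin k =>
      L / 4 ≤ (U i : ℝ) ∧ (U i : ℝ) ≤ 4 * L).card : ℝ) := by exact_mod_cast e4
  have e6 : 7 * (k : ℝ) / 8 ≤ ((Finset.univ.filter fun i : Fin k =>
      L / 4 ≤ (U i : ℝ) ∧ (U i : ℝ) ≤ 4 * L).card : ℝ) := by linarith
  exact e6

end Deterministic

/-! ### Probability of the exceptional event -/

section Probability

variable {n k : ℕ}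

set_option maxHeartbeats 800000 in
/-- A union bound over the five parts of `Atypical`. Each part has probability at most
`exp (-(0.001 * L * k))`, where `L = n p`, the sums over `I` because `L` beats the
`2 ^ k` choices of `I`. -/
lemma bprob_atypical_le {p L : ℝ} (h0 : 0 ≤ p) (h1 : p ≤ 1) (hLdef : L = n * p) (hL : 1000 ≤ L)
    (φ : Fin k → Fin n) (hφ : Function.Injective φ) (hk : 3 ≤ k) (T : Finset (Fin n))
    (hφT : ∀ i, φ i ∈ T) (hT : T.card ≤ 2 * k) (hTn : (T.card : ℝ) ≤ n / 10)
    (hsmall : L * p * T.card ≤ 1 / 40000) :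
    bprob p (allPairs n \ pairs T) (Atypical φ T L) ≤ Real.exp (-(0.0002 * L * T.card)) := by
  have hkR : (3 : ℝ) ≤ k := by exact_mod_cast hk
  have hTR : (T.card : ℝ) ≤ 2 * k := by exact_mod_cast hT
  have hkT : (k : ℝ) ≤ T.card := by
    have : (Finset.univ.image φ).card ≤ T.card := Finset.card_le_card fun u hu => by
      obtain ⟨i, _, rfl⟩ := Finset.mem_image.1 hu
      exact hφT i
    rw [Finset.card_image_of_injective _ hφ, Finset.card_univ, Fintype.card_fin] at this
    exact_mod_cast this
  have hL0 : 0 < L := by linarith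
  have hl1 := Real.log_two_gt_d9
  have hl2 := Real.log_two_lt_d9
  have hn0 : 0 ≤ (n : ℝ) := Nat.cast_nonneg n
  have hTc : ((Tᶜ : Finset (Fin n)).card : ℝ) = n - T.card := by
    rw [Finset.card_compl, Fintype.card_fin,
      Nat.cast_sub (by simpa using Finset.card_le_univ T)]
  have hTc1 : p * ((Tᶜ : Finset (Fin n)).card : ℝ) ≤ L := by
    rw [hTc, hLdef]; nlinarith [mul_nonneg h0 (Nat.cast_nonneg (α := ℝ) T.card)]
  have hTc2 : 0.9 * L ≤ p * ((Tᶜ : Finset (Fin n)).card : ℝ) := by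
    rw [hTc, hLdef]; nlinarith [mul_le_mul_of_nonneg_left hTn h0]
  have hLk : 3000 ≤ L * k := by nlinarith
  set x := Real.exp (-(0.001 * L * k)) with hx
  -- The edge boundary of `T`.
  have b1 : bprob p (allPairs n \ pairs T)
      (fun S => 7 / 4 * L * T.card ≤ ((S ∩ cross T Tᶜ).card : ℝ)) ≤ x := by
    refine (chernoff_upper h0 h1 (cross_subset le_rfl) _).trans (Real.exp_le_exp.2 ?_)
    rw [card_cross disjoint_compl_right, Nat.cast_mul]
    have e1 : p * (T.card * ((Tᶜ : Finset (Fin n)).card : ℝ)) ≤ L * T.card := by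
      nlinarith [mul_le_mul_of_nonneg_left hTc1 (Nat.cast_nonneg (α := ℝ) T.card)]
    have e2 : L * k ≤ L * T.card := mul_le_mul_of_nonneg_left hkT hL0.le
    have e3 : 7 / 4 * L * T.card * 0.69 ≤ 7 / 4 * L * T.card * Real.log 2 :=
      mul_le_mul_of_nonneg_left (by linarith) (by positivity)
    linarith
  have himg : ∀ I : Finset (Fin k), I.image φ ⊆ T := fun I u hu => by
    obtain ⟨i, _, rfl⟩ := Finset.mem_image.1 hu
    exact hφT i
  have hcI : ∀ I : Finset (Fin k), ((cross (I.image φ) Tᶜ).card : ℝ) =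
      I.card * ((Tᶜ : Finset (Fin n)).card : ℝ) := fun I => by
    rw [card_cross (Finset.disjoint_of_subset_left (himg I) disjoint_compl_right),
      Finset.card_image_of_injective _ hφ, Nat.cast_mul]
  have hcount : ∀ f : Finset (Fin k) → ℝ,
      (∀ I ∈ Finset.univ.filter (fun I : Finset (Fin k) => k ≤ 24 * I.card),
        f I ≤ Real.exp (-(0.004 * L * k))) →
      ∑ I ∈ Finset.univ.filter (fun I : Finset (Fin k) => k ≤ 24 * I.card), f I ≤ x := by
    intro f hf
    refine (Finset.sum_le_card_nsmul _ _ _ hf).trans ?_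
    rw [nsmul_eq_mul]
    have hc : ((Finset.univ.filter (fun I : Finset (Fin k) => k ≤ 24 * I.card)).card : ℝ) ≤
        Real.exp (k * Real.log 2) := by
      rw [Real.exp_nat_mul, Real.exp_log two_pos]
      have := Finset.card_filter_le (Finset.univ : Finset (Finset (Fin k)))
        (fun I : Finset (Fin k) => k ≤ 24 * I.card)
      rw [Finset.card_univ, Fintype.card_finset, Fintype.card_fin] at this
      exact_mod_cast this
    refine (mul_le_mul_of_nonneg_right hc (Real.exp_pos _).le).trans ?_
    rw [← Real.exp_add, hx]
    refine Real.exp_le_exp.2 ?_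
    nlinarith
  -- Indices with too many neighbors outside `T`.
  have b2 : bprob p (allPairs n \ pairs T) (fun S =>
      ∃ I ∈ Finset.univ.filter (fun I : Finset (Fin k) => k ≤ 24 * I.card),
        4 * L * I.card ≤ ((S ∩ cross (I.image φ) Tᶜ).card : ℝ)) ≤ x := by
    refine (bprob_exists_le h0 h1 _ _ _).trans (hcount _ fun I hI => ?_)
    have hI' : (k : ℝ) ≤ 24 * I.card := by exact_mod_cast (Finset.mem_filter.1 hI).2
    refine (chernoff_upper h0 h1 (cross_subset (himg I)) _).trans (Real.exp_le_exp.2 ?_)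
    rw [hcI]
    have e1 : p * (I.card * ((Tᶜ : Finset (Fin n)).card : ℝ)) ≤ L * I.card := by
      nlinarith [mul_le_mul_of_nonneg_left hTc1 (Nat.cast_nonneg (α := ℝ) I.card)]
    have e2 : L * k ≤ L * (24 * I.card) := mul_le_mul_of_nonneg_left hI' hL0.le
    have e3 : 4 * L * I.card * 0.69 ≤ 4 * L * I.card * Real.log 2 :=
      mul_le_mul_of_nonneg_left (by linarith) (by positivity)
    linarith
  -- Indices with too few neighbors outside `T`.
  have b3 : bprob p (allPairs n \ pairs T) (fun S =>
      ∃ I ∈ Finset.univ.filter (fun I : Finset (Fin k) => k ≤ 24 * I.card),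
        ((S ∩ cross (I.image φ) Tᶜ).card : ℝ) ≤ L * I.card / 2) ≤ x := by
    refine (bprob_exists_le h0 h1 _ _ _).trans (hcount _ fun I hI => ?_)
    have hI' : (k : ℝ) ≤ 24 * I.card := by exact_mod_cast (Finset.mem_filter.1 hI).2
    refine (chernoff_lower h0 h1 (cross_subset (himg I)) _).trans (Real.exp_le_exp.2 ?_)
    rw [hcI]
    have e1 : 0.9 * L * I.card ≤ p * (I.card * ((Tᶜ : Finset (Fin n)).card : ℝ)) := by
      nlinarith [mul_le_mul_of_nonneg_left hTc2 (Nat.cast_nonneg (α := ℝ) I.card)]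
    have e2 : L * k ≤ L * (24 * I.card) := mul_le_mul_of_nonneg_left hI' hL0.le
    have e3 : L * I.card / 2 * Real.log 2 ≤ L * I.card / 2 * 0.6932 :=
      mul_le_mul_of_nonneg_left (by linarith) (by positivity)
    linarith
  have e0 : L * k / 400 * 0.69 ≤ L * k / 400 * Real.log 2 :=
    mul_le_mul_of_nonneg_left (by linarith) (by positivity)
  -- Vertices with several neighbors in `T`.
  have b4 : bprob p (allPairs n \ pairs T) (fun S =>
      L * k / 400 ≤ ((∑ v ∈ Tᶜ, ((S ∩ starTo T v).card - 1) : ℕ) : ℝ)) ≤ x := by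
    refine (chernoff_excess h0 h1 Tᶜ (starTo T) _
      (fun v hv => (starTo_subset_cross hv).trans (cross_subset le_rfl))
      (fun v hv w _ h => starTo_disjoint hv h) T.card (fun v _ => card_starTo T v) _).trans
      (Real.exp_le_exp.2 ?_)
    have e1 : ((Tᶜ : Finset (Fin n)).card : ℝ) * ((T.card * p) ^ 2 / 2) ≤
        L * (p * T.card * T.card / 2) := by
      have := mul_le_mul_of_nonneg_right hTc1
        (show 0 ≤ p * T.card * T.card / 2 by positivity)
      linarith
    have e2 : L * p * T.card * T.card ≤ 1 / 40000 * T.card :=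
      mul_le_mul_of_nonneg_right hsmall (Nat.cast_nonneg _)
    nlinarith
  -- Edges inside `N(T) \ T`.
  have b5 : bprob p (allPairs n \ pairs T) (fun S =>
      ((outerNbrs T S).card : ℝ) ≤ 2 * L * T.card ∧
        L * k / 400 ≤ ((S ∩ pairs (outerNbrs T S)).card : ℝ)) ≤ x := by
    refine (chernoff_two_stage h0 h1 (cross_subset (le_refl T)) (outerNbrs T) pairs
      (fun S _ => outerNbrs_congr (by rw [Finset.inter_assoc, Finset.inter_self]))
      (fun S _ => pairs_subset (outerNbrs_subset T S)) _ _
      ((2 * L * T.card) * (2 * L * T.card)) (fun S _ h => ?_)).trans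
      (Real.exp_le_exp.2 ?_)
    · refine (Nat.cast_le.2 (card_pairs_le (outerNbrs T S))).trans ?_
      rw [Nat.cast_mul]
      exact mul_le_mul h h (Nat.cast_nonneg _) (by positivity)
    · have e1 : L * T.card * (L * p * T.card) ≤ L * T.card * (1 / 40000) :=
        mul_le_mul_of_nonneg_left hsmall (by positivity)
      have e2 : L * T.card ≤ L * (2 * k) := mul_le_mul_of_nonneg_left hTR hL0.le
      linarith
  have hsum : bprob p (allPairs n \ pairs T) (Atypical φ T L) ≤ x + (x + (x + (x + x))) := by
    refine (bprob_or_le h0 h1 _ _ _).trans (add_le_add b1 ?_)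
    refine (bprob_or_le h0 h1 _ _ _).trans (add_le_add b2 ?_)
    refine (bprob_or_le h0 h1 _ _ _).trans (add_le_add b3 ?_)
    exact (bprob_or_le h0 h1 _ _ _).trans (add_le_add b4 b5)
  refine hsum.trans ?_
  have h5 : (5 : ℝ) ≤ Real.exp (0.0006 * L * k) := by
    have h2 : (5 : ℝ) ≤ Real.exp (1.8) := by
      have := Real.exp_one_gt_d9
      have h3 : Real.exp 1.8 = Real.exp 1 * Real.exp 0.8 := by rw [← Real.exp_add]; norm_num
      have h4 := Real.quadratic_le_exp_of_nonneg (x := 0.8) (by norm_num)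
      rw [h3]; nlinarith
    exact h2.trans (Real.exp_le_exp.2 (by linarith))
  calc x + (x + (x + (x + x))) = 5 * x := by ring
    _ ≤ Real.exp (0.0006 * L * k) * x := mul_le_mul_of_nonneg_right h5 (Real.exp_pos _).le
    _ = Real.exp (-(0.0004 * L * k)) := by rw [hx, ← Real.exp_add]; ring_nf
    _ ≤ _ := Real.exp_le_exp.2 (by nlinarith)

/-- `TypeI` and `Atypical` are independent: the former depends only on the edges inside `T`, the
latter only on the remaining ones. -/
lemma bprob_typeI_and_atypical (p L : ℝ) (φ ψ : Fin k → Fin n) {T : Finset (Fin n)}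
    (hT : (T : Set (Fin n)) = Set.range φ ∪ Set.range ψ) :
    bprob p (allPairs n) (fun S => TypeI (SimpleGraph.fromEdgeSet (S : Set (Sym2 (Fin n)))) φ ψ ∧
        Atypical φ T L S) =
      bprob p (allPairs n)
        (fun S => TypeI (SimpleGraph.fromEdgeSet (S : Set (Sym2 (Fin n)))) φ ψ) *
      bprob p (allPairs n \ pairs T) (Atypical φ T L) := by
  have hφT : ∀ i, φ i ∈ T := fun i => by
    rw [← Finset.mem_coe, hT]; exact Or.inl ⟨i, rfl⟩
  have hψT : ∀ i, ψ i ∈ T := fun i => by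
    rw [← Finset.mem_coe, hT]; exact Or.inr ⟨i, rfl⟩
  have hadj : ∀ (S : Finset (Sym2 (Fin n))), ∀ a ∈ T, ∀ b ∈ T,
      ((SimpleGraph.fromEdgeSet ((S ∩ pairs T : Finset _) : Set (Sym2 (Fin n)))).Adj a b ↔
        (SimpleGraph.fromEdgeSet (S : Set (Sym2 (Fin n)))).Adj a b) := by
    intro S a ha b hb
    simp only [SimpleGraph.fromEdgeSet_adj, Finset.coe_inter, Set.mem_inter_iff, Finset.mem_coe,
      mem_pairs]
    tauto
  have hI : ∀ S : Finset (Sym2 (Fin n)),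
      (TypeI (SimpleGraph.fromEdgeSet (S : Set (Sym2 (Fin n)))) φ ψ ↔
        TypeI (SimpleGraph.fromEdgeSet ((S ∩ pairs T : Finset _) : Set (Sym2 (Fin n)))) φ ψ) := by
    intro S
    simp only [TypeI, IsCycleSeq, hadj S _ (hφT _) _ (hφT _), hadj S _ (hψT _) _ (hψT _)]
  have hinter : ∀ S ⊆ allPairs n, ∀ F ⊆ allPairs n \ pairs T, (S \ pairs T) ∩ F = S ∩ F := by
    intro S _ F hF
    ext e
    have := @hF e
    simp only [Finset.mem_inter, Finset.mem_sdiff] at this ⊢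
    tauto
  have himg : ∀ I : Finset (Fin k), I.image φ ⊆ T := fun I u hu => by
    obtain ⟨i, _, rfl⟩ := Finset.mem_image.1 hu
    exact hφT i
  have hA : ∀ S ⊆ allPairs n, (Atypical φ T L S ↔ Atypical φ T L (S \ pairs T)) := by
    intro S hS
    have e1 := hinter S hS _ (cross_subset (le_refl T))
    have e2 := fun I : Finset (Fin k) => hinter S hS _ (cross_subset (himg I))
    have e3 : ∀ v ∈ Tᶜ, (S \ pairs T) ∩ starTo T v = S ∩ starTo T v := fun v hv =>
      hinter S hS _ ((starTo_subset_cross hv).trans (cross_subset le_rfl))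
    have e4 : outerNbrs T (S \ pairs T) = outerNbrs T S := outerNbrs_congr e1
    have e5 := hinter S hS _ ((pairs_subset (outerNbrs_subset T S)).trans Finset.sdiff_subset)
    have e6 : ∑ v ∈ Tᶜ, (((S \ pairs T) ∩ starTo T v).card - 1) =
        ∑ v ∈ Tᶜ, ((S ∩ starTo T v).card - 1) :=
      Finset.sum_congr rfl fun v hv => by rw [e3 v hv]
    simp only [Atypical, e1, e2, e4, e5, e6]
  have hsub := pairs_subset_allPairs T
  have h1 := bprob_and_split p hsub
    (fun S => TypeI (SimpleGraph.fromEdgeSet (S : Set (Sym2 (Fin n)))) φ ψ) (Atypical φ T L)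
  have h2 : bprob p (allPairs n)
      (fun S => TypeI (SimpleGraph.fromEdgeSet (S : Set (Sym2 (Fin n)))) φ ψ) =
      bprob p (pairs T)
        (fun S => TypeI (SimpleGraph.fromEdgeSet (S : Set (Sym2 (Fin n)))) φ ψ) := by
    refine Eq.trans (bexp_congr fun S _ => ?_) (bexp_inter p hsub fun S =>
      if TypeI (SimpleGraph.fromEdgeSet (S : Set (Sym2 (Fin n)))) φ ψ then 1 else 0)
    exact if_congr (hI S) rfl rfl
  rw [h2, ← h1]
  exact bprob_congr fun S hS => and_congr (hI S) (hA S hS)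

end Probability

/-- If `n·p(n) → ∞` and `p(n) ≤ n^{-1/2-ε}`, there is `c > 0` such that for all large `n`,
all `3 ≤ k ≤ log n` and all maps `φ, ψ : Fin k → Fin n`, conditioned on `(φ,ψ)` being a
type I configuration it holds with probability at least `1 - e^{-c·n·p·t}` (stated here in
the multiplied-out form `Pr(good ∩ C₁) ≥ (1 - e^{-c·n·p·t})·Pr(C₁)`, with
`T = range φ ∪ range ψ` and `t = |T|`) that `|Ñ(T)| < 2npt` and that at least `7k/8`
indices `i` satisfy `np/4 ≤ |U i| ≤ 4np`. -/
theorem private_neighbors_proposition (ε : ℝ) (hε : 0 < ε) (p : ℕ → ℝ)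
    (hp0 : ∀ n, 0 ≤ p n) (hp1 : ∀ n, p n ≤ 1)
    (hgrow : Filter.Tendsto (fun n : ℕ => (n : ℝ) * p n) Filter.atTop Filter.atTop)
    (hupper : ∀ᶠ n : ℕ in Filter.atTop, p n ≤ (n : ℝ) ^ (-(1 / 2 : ℝ) - ε)) :
    ∃ c : ℝ, 0 < c ∧ ∀ᶠ n : ℕ in Filter.atTop, ∀ k : ℕ, 3 ≤ k → (k : ℝ) ≤ Real.log n →
      ∀ φ ψ : Fin k → Fin n,
        (1 - Real.exp (-(c * n * p n * ((Set.range φ ∪ Set.range ψ).ncard : ℝ)))) *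
            gnpProb n (p n) {G : SimpleGraph (Fin n) | TypeI G φ ψ}
          ≤ gnpProb n (p n)
              {G : SimpleGraph (Fin n) | TypeI G φ ψ ∧
                ((closedNbhd G (Set.range φ ∪ Set.range ψ)).ncard : ℝ)
                  < 2 * n * p n * ((Set.range φ ∪ Set.range ψ).ncard : ℝ) ∧
                7 * (k : ℝ) / 8 ≤
                  ((Finset.univ.filter fun i : Fin k =>
                      (n : ℝ) * p n / 4 ≤ ((privateNbrs G φ ψ i).ncard : ℝ) ∧
                        ((privateNbrs G φ ψ i).ncard : ℝ) ≤ 4 * ((n : ℝ) * p n)).card : ℝ)} := by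
  refine ⟨0.0002, by norm_num, ?_⟩
  -- The two growth conditions that the argument uses besides `n p → ∞`.
  have hlim1 : ∀ᶠ n : ℕ in Filter.atTop, 2 * Real.log n ≤ n / 10 := by
    have h := (Real.isLittleO_log_id_atTop.comp_tendsto tendsto_natCast_atTop_atTop).bound
      (show (0 : ℝ) < 1 / 20 by norm_num)
    filter_upwards [h] with n hn
    simp only [Function.comp, id, Real.norm_eq_abs, Nat.abs_cast] at hn
    linarith [le_abs_self (Real.log n)]
  have hlim2 : ∀ᶠ n : ℕ in Filter.atTop, 2 * Real.log n * (n : ℝ) ^ (-(2 * ε)) ≤ 1 / 40000 := by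
    have h := ((isLittleO_log_rpow_atTop (show 0 < 2 * ε by linarith)).comp_tendsto
      tendsto_natCast_atTop_atTop).bound (show (0 : ℝ) < 1 / 80000 by norm_num)
    filter_upwards [h, Filter.eventually_gt_atTop 0] with n hn hpos
    have hnpos : (0 : ℝ) < n := by exact_mod_cast hpos
    simp only [Function.comp, Real.norm_eq_abs] at hn
    rw [abs_of_pos (Real.rpow_pos_of_pos hnpos _)] at hn
    have h2 : Real.log n ≤ 1 / 80000 * (n : ℝ) ^ (2 * ε) := (le_abs_self _).trans hn
    have h3 := mul_le_mul_of_nonneg_right h2 (Real.rpow_pos_of_pos hnpos (-(2 * ε))).le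
    rw [mul_assoc (1 / 80000 : ℝ), ← Real.rpow_add hnpos, add_neg_cancel, Real.rpow_zero] at h3
    linarith
  filter_upwards [hlim1, hlim2, hupper, hgrow.eventually_ge_atTop 1000,
    Filter.eventually_gt_atTop 0] with n hn1 hn2 hpn hL hpos k hk hkn φ ψ
  have hnpos : (0 : ℝ) < n := by exact_mod_cast hpos
  have h0 := hp0 n
  have h1 := hp1 n
  let T : Finset (Fin n) := Finset.univ.image φ ∪ Finset.univ.image ψ
  have hT : (T : Set (Fin n)) = Set.range φ ∪ Set.range ψ := by simp [T]
  have hTcard : T.card ≤ 2 * k := by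
    have ha := Finset.card_union_le (Finset.univ.image φ) (Finset.univ.image ψ)
    have hb := Finset.card_image_le (s := Finset.univ) (f := φ)
    have hc := Finset.card_image_le (s := Finset.univ) (f := ψ)
    rw [Finset.card_univ, Fintype.card_fin] at hb hc
    show (Finset.univ.image φ ∪ Finset.univ.image ψ).card ≤ 2 * k
    omega
  have hTR : (T.card : ℝ) ≤ 2 * Real.log n := by
    have : (T.card : ℝ) ≤ 2 * k := by exact_mod_cast hTcard
    linarith
  have hncard : (Set.range φ ∪ Set.range ψ).ncard = T.card := by
    rw [← hT, Set.ncard_coe_finset]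
  have hsmall : n * p n * p n * T.card ≤ 1 / 40000 := by
    have hsq : n * p n * p n ≤ (n : ℝ) ^ (-(2 * ε)) := by
      calc n * p n * p n = n * (p n * p n) := by ring
        _ ≤ n * ((n : ℝ) ^ (-(1 / 2 : ℝ) - ε) * (n : ℝ) ^ (-(1 / 2 : ℝ) - ε)) := by gcongr
        _ = (n : ℝ) ^ (1 : ℝ) * ((n : ℝ) ^ (-(1 / 2 : ℝ) - ε) *
              (n : ℝ) ^ (-(1 / 2 : ℝ) - ε)) := by rw [Real.rpow_one]
        _ = _ := by
          rw [← Real.rpow_add hnpos, ← Real.rpow_add hnpos]; ring_nf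
    calc n * p n * p n * T.card ≤ (n : ℝ) ^ (-(2 * ε)) * (2 * Real.log n) := by gcongr
      _ ≤ _ := by linarith
  rw [gnpProb_eq, gnpProb_eq, hncard]
  simp only [Set.mem_ofPred_eq]
  set E := allPairs n with hE
  by_cases hφ : Function.Injective φ
  swap
  -- Without injectivity `φ` is no cycle, and so the left side is zero.
  · have hzero : bprob (p n) E (fun S =>
        TypeI (SimpleGraph.fromEdgeSet (S : Set (Sym2 (Fin n)))) φ ψ) = 0 := by
      rw [← bexp_const (p n) 0 E]
      exact bexp_congr fun S _ => if_neg fun h => hφ h.2.2.1.1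
    rw [hzero, mul_zero]
    exact bprob_nonneg h0 h1 _ _
  have hbad := bprob_atypical_le h0 h1 rfl hL φ hφ hk T
    (fun i => Finset.mem_union_left _ (Finset.mem_image_of_mem φ (Finset.mem_univ i)))
    hTcard (hTR.trans hn1) hsmall
  have hind := bprob_typeI_and_atypical (p n) (n * p n) φ ψ hT
  have hI0 : 0 ≤ bprob (p n) E (fun S =>
      TypeI (SimpleGraph.fromEdgeSet (S : Set (Sym2 (Fin n)))) φ ψ) := bprob_nonneg h0 h1 _ _
  have hsplit := (bprob_mono h0 h1 (E := E)
    (P := fun S => TypeI (SimpleGraph.fromEdgeSet (S : Set (Sym2 (Fin n)))) φ ψ)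
    (Q := fun S => (TypeI (SimpleGraph.fromEdgeSet (S : Set (Sym2 (Fin n)))) φ ψ ∧
      ((closedNbhd (SimpleGraph.fromEdgeSet (S : Set (Sym2 (Fin n))))
          (Set.range φ ∪ Set.range ψ)).ncard : ℝ) < 2 * n * p n * (T.card : ℝ) ∧
      7 * (k : ℝ) / 8 ≤ ((Finset.univ.filter fun i : Fin k =>
        (n : ℝ) * p n / 4 ≤
            ((privateNbrs (SimpleGraph.fromEdgeSet (S : Set (Sym2 (Fin n)))) φ ψ i).ncard : ℝ) ∧
          ((privateNbrs (SimpleGraph.fromEdgeSet (S : Set (Sym2 (Fin n)))) φ ψ i).ncard : ℝ) ≤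
            4 * ((n : ℝ) * p n)).card : ℝ)) ∨
      (TypeI (SimpleGraph.fromEdgeSet (S : Set (Sym2 (Fin n)))) φ ψ ∧
        Atypical φ T (n * p n) S)) ?_).trans (bprob_or_le h0 h1 E _ _)
  · rw [hind] at hsplit
    have hprod := mul_le_mul_of_nonneg_left hbad hI0
    have hexp : Real.exp (-(0.0002 * n * p n * (T.card : ℝ))) =
        Real.exp (-(0.0002 * (n * p n) * T.card)) := by ring_nf
    rw [hexp]
    linarith
  · intro S hS hTI
    by_cases hA : Atypical φ T (n * p n) S
    · exact Or.inr ⟨hTI, hA⟩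
    · have hGS : ∀ u v, (SimpleGraph.fromEdgeSet (S : Set (Sym2 (Fin n)))).Adj u v ↔
          s(u, v) ∈ S := by
        intro u v
        rw [SimpleGraph.fromEdgeSet_adj, Finset.mem_coe]
        exact ⟨fun h => h.1, fun h => ⟨h, mem_allPairs.1 (hS h)⟩⟩
      have hg := good_of_not_atypical hS hGS hk hTI hT (by linarith) hA
      refine Or.inl ⟨hTI, ?_, hg.2⟩
      rw [mul_assoc 2 (n : ℝ)]
      exact hg.1
end

section
/- Let p = p(n) satisfy n·p(n) → ∞ and p(n) ≤ O(log n / n). Pick a random G(n,p) graph G = (V,E) and two uniformly random independent maps φ, ψ : {1,...,k} → V with 3 ≤ k ≤ log n. Let T = Image(φ) ∪ Image(ψ) and let P ⊆ T be the set of vertices of T at graph distance at most 2 from V ∖ R(G). Then for every constant C > 0, for all sufficiently large n and all 3 ≤ k ≤ log n: Pr(|P| > k/8 | C₁) ≤ (np)^{−C·k} and Pr(|P| > k/8 | C₂) ≤ (np)^{−C·k}. -/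
/-!
The conditional probability is an average over the maps `φ` and `ψ`, so it is enough to bound it
for each fixed admissible pair. For such a pair, being a configuration means that a set `E₀` of
edges on the vertex set `T` is present in `G`, and conditioning on this leaves all other pairs
independent. Each vertex of `T` lies on at least two and at most four edges of `E₀`; hence `T` is
always contained in the 2-core, and only the parts of `G` hanging off `T` matter.

*Structure* (`structure_lemma`). Let `N` be the complement of the 2-core. Let `U` be the set of core
vertices outside `T` with a neighbour in `T` and a neighbour in `N`, and let `A` consist of `U`
and the vertices of `T` with a neighbour in `N`. A vertex of `T` within distance two of `N` is in `A`
or adjacent to `A`. Starting from `T` and `U`, explore `N` for as long as possible; this reaches a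
set `D ⊆ N`, and `X = U ∪ D` carries a parent edge for each vertex. A vertex of `N` has at most one
neighbour in the core, so `|A| ≤ |D|` and `|X| ≤ 2 |D|`. By peeling off vertices of degree at most
one (`peel`), at most `|D|` edges of `G` touch `D`; so these are exactly the parent edges of `D`.

*Large `D`* (`gsum_pend_le`). A given `X`, `D` and parent map requires `|X|` edges to be present and
essentially all of the at least `|D| (n - 1) / 2 ≥ |X| (n - 1) / 4` pairs touching `D` to be absent.
This has probability at most `(p * exp (-(np - 5) / 4)) ^ |X|`. With `|X| = m ≥ k / 100` there are at
most `choose n m * 2 ^ m * (m + 2 k) ^ m ≤ (2 * exp 201 * n) ^ m` choices, so the union bound gives a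
geometric series with base `O(np * exp (-np / 4))`, which is smaller than any given power of `np`.

*Small `D`* (`gsum_dense_le`). If `|D| < k / 100`, the vertices of `A` and their neighbours along `E₀`
account for at most `5 |A| ≤ 5 k / 100` of the more than `k / 8` vertices, so at least `3 k / 80` edges
outside `E₀` join `A` to `T`. As `|A| < k / 100`, a union bound over `A` and over `j = ⌈3 k / 80⌉` of
these edges gives `(n ^ (1/3) * 2 k ^ 2 * p) ^ j`, and here `p = O(log n / n)` and `k ≤ log n` make the
base smaller than any given power of `1 / log n`, hence of `1 / (np)`.
-/

open scoped Classical

/-- Conditional probability `Pr(A | C)` for events on a `G(n,p)` graph together with two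
uniformly random maps `φ ψ : Fin k → Fin n`. -/
noncomputable def gnpCfgCondProb (n k : ℕ) (p : ℝ)
    (A C : SimpleGraph (Fin n) → (Fin k → Fin n) → (Fin k → Fin n) → Prop) : ℝ :=
  gnpCfgProb n k p (fun G φ ψ => A G φ ψ ∧ C G φ ψ) / gnpCfgProb n k p C

/-- The vertex set of the 2-core of `G`: the largest set of vertices inducing a
subgraph of minimum degree at least 2 (the union of all such sets). -/
def twoCore {V : Type*} (G : SimpleGraph V) : Set V :=
  ⋃₀ {S : Set V | ∀ v ∈ S, 2 ≤ ({u ∈ S | G.Adj v u} : Set V).ncard}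

/-- The peripheral vertices of `T = range φ ∪ range ψ`: those at graph distance at most 2
from the complement of the 2-core. -/
def peripheral {n k : ℕ} (G : SimpleGraph (Fin n)) (φ ψ : Fin k → Fin n) : Set (Fin n) :=
  {v | v ∈ Set.range φ ∪ Set.range ψ ∧
    (v ∉ twoCore G ∨ (∃ w, w ∉ twoCore G ∧ G.Adj v w) ∨
      ∃ u, G.Adj v u ∧ ∃ w, w ∉ twoCore G ∧ G.Adj u w)}

/-! ### The vertices near the complement of the 2-core -/

section Deterministic

variable {V : Type*}

/-- A set inducing minimum degree at least two lies in the 2-core. -/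
lemma subset_twoCore {G : SimpleGraph V} {S : Set V}
    (h : ∀ v ∈ S, 2 ≤ ({u ∈ S | G.Adj v u} : Set V).ncard) : S ⊆ twoCore G :=
  Set.subset_sUnion_of_mem h

lemma twoCore_deg [Finite V] (G : SimpleGraph V) {v : V} (hv : v ∈ twoCore G) :
    2 ≤ ({u ∈ twoCore G | G.Adj v u} : Set V).ncard := by
  obtain ⟨S, hS, hvS⟩ := hv
  refine (hS v hvS).trans (Set.ncard_le_ncard ?_ (Set.toFinite _))
  exact fun u hu => ⟨subset_twoCore hS hu.1, hu.2⟩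

/-- By maximality of the 2-core, any nonempty set outside it has a vertex with at most one
neighbour in the union of the set and the core. -/
lemma exists_low [Finite V] (G : SimpleGraph V) {S : Set V} (hne : S.Nonempty)
    (hS : Disjoint S (twoCore G)) :
    ∃ x ∈ S, ({u ∈ S ∪ twoCore G | G.Adj x u} : Set V).ncard ≤ 1 := by
  by_contra! hcon
  obtain ⟨x, hx⟩ := hne
  have h : S ∪ twoCore G ⊆ twoCore G := by
    apply subset_twoCore
    rintro v (hv | hv)
    · exact hcon v hv
    · refine (twoCore_deg G hv).trans (Set.ncard_le_ncard ?_ (Set.toFinite _))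
      exact fun u hu => ⟨Or.inr hu.1, hu.2⟩
  exact Set.disjoint_left.1 hS hx (h (Or.inl hx))

/-- Otherwise the vertex `w` could be added to the core. -/
lemma core_nbr_unique [Finite V] (G : SimpleGraph V) {w a b : V} (hw : w ∉ twoCore G)
    (ha : a ∈ twoCore G) (hb : b ∈ twoCore G) (hwa : G.Adj w a) (hwb : G.Adj w b) : a = b := by
  obtain ⟨x, hx, hc⟩ := exists_low G (S := {w}) ⟨w, rfl⟩ (Set.disjoint_singleton_left.2 hw)
  obtain rfl : x = w := hx
  exact (Set.ncard_le_one (Set.toFinite _)).1 hc a ⟨Or.inr ha, hwa⟩ b ⟨Or.inr hb, hwb⟩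

/-- Peeling: the edges between a set outside the 2-core and its union with the core can be charged
injectively to the vertices of the set, via a map `q` recording the last remaining neighbour
when a vertex is peeled off. -/
lemma peel [Finite V] (G : SimpleGraph V) (S : Finset V) (hS : ∀ x ∈ S, x ∉ twoCore G) :
    ∃ q : V → V, ∀ x ∈ S, ∀ y, (y ∈ S ∨ y ∈ twoCore G) → G.Adj x y →
      ∃ z ∈ S, s(x, y) = s(z, q z) := by
  induction hn : S.card generalizing S with
  | zero =>
    obtain rfl := Finset.card_eq_zero.1 hn
    exact ⟨id, by simp⟩
  | succ m ih =>
    have hne : S.Nonempty := by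
      rw [← Finset.card_pos]; omega
    obtain ⟨x₀, hx₀, hlow⟩ := exists_low G (S := (S : Set V)) hne
      (Set.disjoint_left.2 fun x hx => hS x hx)
    obtain ⟨q, hq⟩ := ih (S.erase x₀) (fun x hx => hS x (Finset.mem_of_mem_erase hx))
      (by rw [Finset.card_erase_of_mem hx₀]; omega)
    have hlow' := (Set.ncard_le_one (Set.toFinite _)).1 hlow
    have key : ∃ y₀, ∀ y, (y ∈ S ∨ y ∈ twoCore G) → G.Adj x₀ y → y = y₀ := by
      by_cases h : ∃ y₀, (y₀ ∈ S ∨ y₀ ∈ twoCore G) ∧ G.Adj x₀ y₀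
      · obtain ⟨y₀, h1, h2⟩ := h
        exact ⟨y₀, fun y hy hxy => hlow' y ⟨hy, hxy⟩ y₀ ⟨h1, h2⟩⟩
      · push Not at h
        exact ⟨x₀, fun y hy hxy => absurd hxy (h y hy)⟩
    obtain ⟨y₀, hy₀⟩ := key
    refine ⟨Function.update q x₀ y₀, fun x hx y hy hxy => ?_⟩
    by_cases h1 : x = x₀
    · subst h1
      exact ⟨x, hx, by simp [hy₀ y hy hxy]⟩
    by_cases h2 : y = x₀
    · subst h2
      refine ⟨y, hx₀, ?_⟩
      rw [Function.update_self, ← hy₀ x (Or.inl hx) hxy.symm, Sym2.eq_swap]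
    · obtain ⟨z, hz, hzq⟩ := hq x (Finset.mem_erase.2 ⟨h1, hx⟩) y
        (hy.imp_left fun h => Finset.mem_erase.2 ⟨h2, h⟩) hxy
      exact ⟨z, Finset.mem_of_mem_erase hz, by
        rw [Function.update_of_ne (Finset.ne_of_mem_erase hz), hzq]⟩

/-- Starting from parents in `T` for the vertices of `U`, the set `U` can be extended by
vertices of `N`, each given a parent, until it absorbs everything in `N` adjacent to it or to `T`.
Distinct vertices have distinct parent edges. -/
lemma grow [Fintype V] (G : SimpleGraph V) (T U N : Finset V) (hUT : Disjoint U T)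
    (hNT : Disjoint N T) (hU : ∀ u ∈ U, ∃ t ∈ T, G.Adj u t) :
    ∃ (X : Finset V) (par : V → V), U ⊆ X ∧ X ⊆ U ∪ N ∧ (∀ x ∈ X, par x ∈ X ∪ T) ∧
      (∀ x ∈ X, G.Adj x (par x)) ∧ Set.InjOn (fun x => s(x, par x)) X ∧
      ∀ x ∈ X ∪ T, ∀ y ∈ N, G.Adj x y → y ∈ X := by
  let Good : Finset V → Prop := fun X => ∃ par : V → V, U ⊆ X ∧ X ⊆ U ∪ N ∧
    (∀ x ∈ X, par x ∈ X ∪ T) ∧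
    (∀ x ∈ X, G.Adj x (par x)) ∧ Set.InjOn (fun x => s(x, par x)) X
  have h0 : Good U := by
    choose! f hf using hU
    refine ⟨f, Finset.Subset.refl _, Finset.subset_union_left,
      fun x hx => Finset.mem_union_right _ (hf x hx).1, fun x hx => (hf x hx).2, ?_⟩
    intro x hx y hy hxy
    simp only [Sym2.eq_iff] at hxy
    rcases hxy with h | h
    · exact h.1
    · exact absurd (h.1 ▸ (hf y hy).1) (Finset.disjoint_left.1 hUT hx)
  obtain ⟨X, hX, hmax⟩ := Finset.exists_max_image (Finset.univ.filter Good) Finset.card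
    ⟨U, by simpa using h0⟩
  obtain ⟨par, h1, h2, h3, h4, h5⟩ := (Finset.mem_filter.1 hX).2
  refine ⟨X, par, h1, h2, h3, h4, h5, fun x hx y hy hxy => ?_⟩
  by_contra hyX
  have hyT : y ∉ T := Finset.disjoint_left.1 hNT hy
  have hg : Good (insert y X) := by
    have hp : ∀ z ∈ X, Function.update par y x z = par z := fun z hz =>
      Function.update_of_ne (ne_of_mem_of_not_mem hz hyX) _ _
    have hny : ∀ z ∈ X, s(z, par z) ≠ s(y, x) := by
      intro z hz h
      have : y ∈ s(z, par z) := by rw [h]; simp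
      rcases Sym2.mem_iff.1 this with h | h
      · exact hyX (h ▸ hz)
      · have := h3 z hz
        rw [← h, Finset.mem_union] at this
        tauto
    refine ⟨Function.update par y x, h1.trans (Finset.subset_insert _ _), ?_, ?_, ?_, ?_⟩
    · exact Finset.insert_subset (Finset.mem_union_right _ hy) h2
    · intro z hz
      rcases Finset.mem_insert.1 hz with rfl | hz
      · rw [Function.update_self, Finset.insert_union]
        exact Finset.mem_insert_of_mem hx
      · rw [hp z hz, Finset.insert_union]
        exact Finset.mem_insert_of_mem (h3 z hz)
    · intro z hz
      rcases Finset.mem_insert.1 hz with rfl | hz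
      · rw [Function.update_self]; exact hxy.symm
      · rw [hp z hz]; exact h4 z hz
    · intro z hz z' hz' hzz
      simp only at hzz
      rcases Finset.mem_insert.1 hz with h | h <;> rcases Finset.mem_insert.1 hz' with h' | h'
      · rw [h, h']
      · rw [h, Function.update_self, hp z' h'] at hzz
        exact absurd hzz.symm (hny z' h')
      · rw [h', Function.update_self, hp z h] at hzz
        exact absurd hzz (hny z h)
      · rw [hp z h, hp z' h'] at hzz
        exact h5 h h' hzz
  have := hmax (insert y X) (by simpa using hg)
  rw [Finset.card_insert_of_notMem hyX] at this
  omega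

/-- `Near G v`: the vertex `v` is at distance at most two from the complement of the 2-core. -/
def Near (G : SimpleGraph V) (v : V) : Prop :=
  v ∉ twoCore G ∨ (∃ w, w ∉ twoCore G ∧ G.Adj v w) ∨
      ∃ u, G.Adj v u ∧ ∃ w, w ∉ twoCore G ∧ G.Adj u w

/-- `Pend G T X D par`: the parent edges `x — par x`, for `x ∈ X`, are distinct edges of `G`
hanging the set `X` off `T`, and they include every edge of `G` that touches `D ⊆ X`. The bound
`|X| ≤ 2 |D|` says that at most half of `X` is left unconstrained. -/
def Pend (G : SimpleGraph V) (T X D : Finset V) (par : V → V) : Prop :=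
  Disjoint X T ∧ D ⊆ X ∧ X.card ≤ 2 * D.card ∧ (∀ x ∈ X, par x ∈ X ∪ T) ∧
    Set.InjOn (fun x => s(x, par x)) X ∧ (∀ x ∈ X, G.Adj x (par x)) ∧
    ∀ x ∈ D, ∀ y, G.Adj x y → ∃ z ∈ X, s(x, y) = s(z, par z)

/-- The vertices of `T` near the complement of the 2-core are dominated by a small set `A`, whose
size is bounded by that of a pendant structure `D`: apart from `5 |A|` of them, they are covered
by edges of `G` outside `E₀` that join `A` to `T`. -/
lemma structure_lemma [Fintype V] (G : SimpleGraph V) (T : Finset V) (E₀ : Finset (Sym2 V))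
    (hG : ∀ e ∈ E₀, e ∈ G.edgeFinset)
    (hmin : ∀ t ∈ T, 2 ≤ (T.filter fun v => s(t, v) ∈ E₀).card)
    (hmax : ∀ t, (T.filter fun v => s(t, v) ∈ E₀).card ≤ 4) :
    ∃ (X D : Finset V) (par : V → V), Pend G T X D par ∧
      ∃ A : Finset V, A.card ≤ D.card ∧
        (T.filter (Near G)).card ≤ 5 * A.card +
          2 * (G.edgeFinset.filter fun e => e ∉ E₀ ∧ ∃ a ∈ A, ∃ t ∈ T, e = s(a, t)).card := by
  have hTcore : ∀ t ∈ T, t ∈ twoCore G := by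
    refine subset_twoCore (S := (T : Set V)) fun v hv => ?_
    refine (hmin v hv).trans ?_
    rw [← Set.ncard_coe_finset]
    refine Set.ncard_le_ncard (fun u hu => ?_) (Set.toFinite _)
    have hu' := Finset.mem_filter.1 hu
    exact ⟨hu'.1, by simpa using hG _ hu'.2⟩
  let N : Finset V := Finset.univ.filter fun x => x ∉ twoCore G
  have hN : ∀ x, x ∈ N ↔ x ∉ twoCore G := fun x => by simp [N]
  let U : Finset V := Finset.univ.filter fun u => u ∈ twoCore G ∧ u ∉ T ∧
    (∃ t ∈ T, G.Adj u t) ∧ ∃ w ∈ N, G.Adj u w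
  have hUm : ∀ u, u ∈ U ↔ u ∈ twoCore G ∧ u ∉ T ∧ (∃ t ∈ T, G.Adj u t) ∧ ∃ w ∈ N, G.Adj u w :=
    fun u => by simp [U]
  have hUT : Disjoint U T := Finset.disjoint_left.2 fun x hx => ((hUm x).1 hx).2.1
  have hNT : Disjoint N T := Finset.disjoint_left.2 fun x hx h => (hN x).1 hx (hTcore x h)
  have hUN : Disjoint U N := Finset.disjoint_left.2 fun x hx h => (hN x).1 h ((hUm x).1 hx).1
  obtain ⟨X, par, hUX, hXUN, hpar, hadj, hinj, hcl⟩ := grow G T U N hUT hNT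
    (fun u hu => ((hUm u).1 hu).2.2.1)
  let D := X.filter (· ∈ N)
  have hD : ∀ x, x ∈ D ↔ x ∈ X ∧ x ∈ N := fun x => by simp [D]
  let A := U ∪ T.filter fun t => ∃ w ∈ N, G.Adj t w
  have hA1 : ∀ a ∈ A, ∃ w, a ∈ twoCore G ∧ w ∈ D ∧ G.Adj a w := by
    intro a ha
    rcases Finset.mem_union.1 ha with h | h
    · obtain ⟨h1, h2, h3, w, hw, haw⟩ := (hUm a).1 h
      exact ⟨w, h1, (hD w).2 ⟨hcl a (Finset.mem_union_left _ (hUX h)) w hw haw, hw⟩, haw⟩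
    · obtain ⟨h1, w, hw, haw⟩ := Finset.mem_filter.1 h
      exact ⟨w, hTcore a h1, (hD w).2 ⟨hcl a (Finset.mem_union_right _ h1) w hw haw, hw⟩, haw⟩
  -- A vertex outside the core has at most one neighbour inside, so `A` injects into `D`.
  have hAD : A.card ≤ D.card := by
    choose! f hf using hA1
    refine Finset.card_le_card_of_injOn f (fun a ha => (hf a ha).2.1) ?_
    intro a ha b hb hab
    have h1 := hf a ha
    have h2 := hf b hb
    refine core_nbr_unique G (w := f a) ((hN _).1 ((hD _).1 h1.2.1).2) h1.1 h2.1 h1.2.2.symm ?_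
    rw [hab]; exact h2.2.2.symm
  have hXsub : X ⊆ U ∪ D := by
    intro x hx
    rcases Finset.mem_union.1 (hXUN hx) with h | h
    · exact Finset.mem_union_left _ h
    · exact Finset.mem_union_right _ ((hD x).2 ⟨hx, h⟩)
  refine ⟨X, D, par, ⟨?_, Finset.filter_subset _ _, ?_, hpar, hinj, hadj, ?_⟩, A, hAD, ?_⟩
  · exact (Finset.disjoint_union_left.2 ⟨hUT, hNT⟩).mono_left hXUN
  · have h1 := Finset.card_le_card hXsub
    have h2 := Finset.card_union_le U D
    have h3 : U.card ≤ A.card := Finset.card_le_card Finset.subset_union_left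
    omega
  · -- At most `|D|` edges touch `D` by peeling, and the parent edges of `D` are that many.
    obtain ⟨q, hq⟩ := peel G N (fun x hx => (hN x).1 hx)
    let B := G.edgeFinset.filter fun e => ∃ x ∈ D, x ∈ e
    have hB1 : B ⊆ D.image fun z => s(z, q z) := by
      intro e he
      obtain ⟨he, x, hx, hxe⟩ := Finset.mem_filter.1 he
      obtain ⟨y, rfl⟩ := Sym2.mem_iff_exists.1 hxe
      have hxy : G.Adj x y := by simpa using he
      obtain ⟨z, hz, hzz⟩ := hq x ((hD x).1 hx).2 y (by rw [hN]; tauto) hxy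
      refine Finset.mem_image.2 ⟨z, ?_, hzz.symm⟩
      have : z ∈ s(x, y) := by rw [hzz]; simp
      rcases Sym2.mem_iff.1 this with rfl | rfl
      · exact hx
      · exact (hD z).2 ⟨hcl x (Finset.mem_union_left _ ((hD x).1 hx).1) z hz hxy, hz⟩
    have hB2 : D.image (fun z => s(z, par z)) ⊆ B := by
      intro e he
      obtain ⟨z, hz, rfl⟩ := Finset.mem_image.1 he
      exact Finset.mem_filter.2 ⟨by simpa using hadj z ((hD z).1 hz).1, z, hz, by simp⟩
    have hc : (D.image (fun z => s(z, par z))).card = D.card :=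
      Finset.card_image_of_injOn (hinj.mono fun x hx => ((hD x).1 hx).1)
    have hBe : D.image (fun z => s(z, par z)) = B := by
      apply Finset.eq_of_subset_of_card_le hB2
      rw [hc]
      exact (Finset.card_le_card hB1).trans Finset.card_image_le
    intro x hx y hxy
    have : s(x, y) ∈ B := Finset.mem_filter.2 ⟨by simpa using hxy, x, hx, by simp⟩
    rw [← hBe] at this
    obtain ⟨z, hz, hzz⟩ := Finset.mem_image.1 this
    exact ⟨z, ((hD z).1 hz).1, hzz.symm⟩
  · set F := G.edgeFinset.filter fun e => e ∉ E₀ ∧ ∃ a ∈ A, ∃ t ∈ T, e = s(a, t) with hF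
    have hcov : T.filter (Near G) ⊆ (A ∪ A.biUnion fun a => T.filter fun v => s(a, v) ∈ E₀) ∪
        F.biUnion fun e => e.toFinset := by
      intro v hv
      obtain ⟨hvT, hnear⟩ := Finset.mem_filter.1 hv
      have hvc := hTcore v hvT
      have hbase : ∀ w, w ∉ twoCore G → G.Adj v w → v ∈ A := fun w hw hvw =>
        Finset.mem_union_right _ (Finset.mem_filter.2 ⟨hvT, w, (hN w).2 hw, hvw⟩)
      rw [Finset.mem_union, Finset.mem_union]
      rcases hnear with h | ⟨w, hw, hvw⟩ | ⟨u, hvu, w, hw, huw⟩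
      · exact absurd hvc h
      · exact Or.inl (Or.inl (hbase w hw hvw))
      · by_cases huc : u ∈ twoCore G
        · have huA : u ∈ A := by
            by_cases huT : u ∈ T
            · exact Finset.mem_union_right _ (Finset.mem_filter.2 ⟨huT, w, (hN w).2 hw, huw⟩)
            · exact Finset.mem_union_left _
                ((hUm u).2 ⟨huc, huT, ⟨v, hvT, hvu.symm⟩, w, (hN w).2 hw, huw⟩)
          by_cases he : s(u, v) ∈ E₀
          · exact Or.inl (Or.inr (Finset.mem_biUnion.2 ⟨u, huA, Finset.mem_filter.2 ⟨hvT, he⟩⟩))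
          · refine Or.inr (Finset.mem_biUnion.2 ⟨s(u, v), ?_, by simp⟩)
            exact Finset.mem_filter.2 ⟨by simpa using hvu.symm, he, u, huA, v, hvT, rfl⟩
        · exact Or.inl (Or.inl (hbase u huc hvu))
    have h1 := Finset.card_le_card hcov
    have h2 := Finset.card_union_le (A ∪ A.biUnion fun a => T.filter fun v => s(a, v) ∈ E₀)
      (F.biUnion fun e => e.toFinset)
    have h3 := Finset.card_union_le A (A.biUnion fun a => T.filter fun v => s(a, v) ∈ E₀)
    have h4 := Finset.card_biUnion_le_card_mul A (fun a => T.filter fun v => s(a, v) ∈ E₀) 4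
      (fun a _ => hmax a)
    have h5 := Finset.card_biUnion_le_card_mul F (fun e => e.toFinset) 2 (fun e _ => by
      rw [Sym2.card_toFinset]; split_ifs <;> omega)
    omega

end Deterministic

/-! ### Probabilities in the random graph -/

section Probability

/-- The probability that a `G(n,p)` graph has the property `A`. -/
noncomputable def gsum (n : ℕ) (p : ℝ) (A : SimpleGraph (Fin n) → Prop) : ℝ :=
  ∑ G : SimpleGraph (Fin n), if A G then gnpWeight n p G else 0

variable {n : ℕ} {p : ℝ}

lemma gnpWeight_nonneg (hp0 : 0 ≤ p) (hp1 : p ≤ 1) (G : SimpleGraph (Fin n)) :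
    0 ≤ gnpWeight n p G :=
  mul_nonneg (pow_nonneg hp0 _) (pow_nonneg (by linarith) _)

lemma gsum_mono (hp0 : 0 ≤ p) (hp1 : p ≤ 1) {A B : SimpleGraph (Fin n) → Prop}
    (h : ∀ G, A G → B G) : gsum n p A ≤ gsum n p B := by
  refine Finset.sum_le_sum fun G _ => ?_
  have := gnpWeight_nonneg hp0 hp1 G
  by_cases hA : A G
  · simp [hA, h G hA]
  · rw [if_neg hA]; split_ifs <;> simp [this]

lemma gsum_union (hp0 : 0 ≤ p) (hp1 : p ≤ 1) {ι : Type*} (s : Finset ι)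
    {A : SimpleGraph (Fin n) → Prop} {B : ι → SimpleGraph (Fin n) → Prop}
    (h : ∀ G, A G → ∃ i ∈ s, B i G) : gsum n p A ≤ ∑ i ∈ s, gsum n p (B i) := by
  unfold gsum
  rw [Finset.sum_comm]
  refine Finset.sum_le_sum fun G _ => ?_
  have hw := gnpWeight_nonneg hp0 hp1 G
  have hnn : ∀ i ∈ s, 0 ≤ (if B i G then gnpWeight n p G else 0) := fun i _ => by
    split_ifs <;> simp [hw]
  by_cases hA : A G
  · obtain ⟨i, hi, hB⟩ := h G hA
    rw [if_pos hA]
    have := Finset.single_le_sum hnn hi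
    rwa [if_pos hB] at this
  · rw [if_neg hA]; exact Finset.sum_nonneg hnn

lemma gsum_or (hp0 : 0 ≤ p) (hp1 : p ≤ 1)
    {A B C : SimpleGraph (Fin n) → Prop}
    (h : ∀ G, A G → B G ∨ C G) : gsum n p A ≤ gsum n p B + gsum n p C := by
  have := gsum_union hp0 hp1 (n := n) (Finset.univ : Finset Bool) (A := A)
    (B := fun b G => if b then B G else C G) (fun G hG => by
      rcases h G hG with h | h
      · exact ⟨true, by simp, by simpa using h⟩
      · exact ⟨false, by simp, by simpa using h⟩)
  simpa using this

lemma gsum_false {A : SimpleGraph (Fin n) → Prop} (h : ∀ G, ¬ A G) : gsum n p A = 0 :=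
  Finset.sum_eq_zero fun G _ => if_neg (h G)

/-- Independence of the edges: the pairs in `F` are all present and those in `N` all absent
with probability `p ^ |F| * (1 - p) ^ |N|`. -/
lemma gsum_cylinder (F N : Finset (Sym2 (Fin n)))
    (hF : F ⊆ (⊤ : SimpleGraph (Fin n)).edgeFinset) (hN : N ⊆ (⊤ : SimpleGraph (Fin n)).edgeFinset)
    (hFN : Disjoint F N) :
    gsum n p (fun G => F ⊆ G.edgeFinset ∧ Disjoint N G.edgeFinset) =
      p ^ F.card * (1 - p) ^ N.card := by
  set W := (⊤ : SimpleGraph (Fin n)).edgeFinset with hW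
  have hWc : W.card = n.choose 2 := by
    rw [hW, SimpleGraph.card_edgeFinset_top_eq_card_choose_two]; simp
  have hWd : ∀ e ∈ W, ¬ e.IsDiag := fun e he => by
    simpa [hW] using he
  set M := (W \ F) \ N with hM
  have hMc : M.card + F.card + N.card = n.choose 2 := by
    rw [← hWc]
    have h1 := Finset.card_sdiff_add_card_eq_card hF
    have h2 : N ⊆ W \ F := Finset.subset_sdiff.2 ⟨hN, hFN.symm⟩
    have h3 := Finset.card_sdiff_add_card_eq_card h2
    rw [← hM] at h3
    omega
  have hGW : ∀ G : SimpleGraph (Fin n), G.edgeFinset ⊆ W := fun G =>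
    SimpleGraph.edgeFinset_mono le_top
  obtain ⟨gr, hgr⟩ : ∃ gr : Finset (Sym2 (Fin n)) → SimpleGraph (Fin n),
      ∀ S, gr S = SimpleGraph.fromEdgeSet (↑(F ∪ S) : Set (Sym2 (Fin n))) := ⟨_, fun _ => rfl⟩
  have hfrom : ∀ S ⊆ M, ∀ [Fintype (gr S).edgeSet], (gr S).edgeFinset = F ∪ S := by
    intro S hS _
    ext e
    rw [SimpleGraph.mem_edgeFinset, hgr, SimpleGraph.edgeSet_fromEdgeSet]
    simp only [Set.mem_sdiff, Finset.mem_coe]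
    constructor
    · exact fun h => h.1
    · refine fun h => ⟨h, ?_⟩
      have : e ∈ W := by
        rcases Finset.mem_union.1 h with h | h
        · exact hF h
        · exact (Finset.mem_sdiff.1 (Finset.mem_sdiff.1 (hS h)).1).1
      simpa using hWd e this
  have hstart : gsum n p (fun G => F ⊆ G.edgeFinset ∧ Disjoint N G.edgeFinset) =
      ∑ G ∈ Finset.univ.filter (fun G : SimpleGraph (Fin n) =>
        F ⊆ G.edgeFinset ∧ Disjoint N G.edgeFinset), gnpWeight n p G := by
    unfold gsum
    rw [Finset.sum_filter]
    exact Finset.sum_congr rfl fun G _ => by congr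
  have key : ∑ G ∈ Finset.univ.filter (fun G : SimpleGraph (Fin n) =>
      F ⊆ G.edgeFinset ∧ Disjoint N G.edgeFinset), gnpWeight n p G =
      ∑ S ∈ M.powerset, (p ^ F.card * (1 - p) ^ N.card) *
        (p ^ S.card * (1 - p) ^ (M.card - S.card)) := by
    refine Finset.sum_bij' (fun G _ => G.edgeFinset \ F)
      (fun S _ => gr S) ?_ ?_ ?_ ?_ ?_
    · intro G hG
      obtain ⟨h1, h2⟩ := (Finset.mem_filter.1 hG).2
      rw [Finset.mem_powerset]
      intro e he
      obtain ⟨he1, he2⟩ := Finset.mem_sdiff.1 he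
      exact Finset.mem_sdiff.2 ⟨Finset.mem_sdiff.2 ⟨hGW G he1, he2⟩,
        fun h => Finset.disjoint_left.1 h2 h he1⟩
    · intro S hS
      rw [Finset.mem_powerset] at hS
      rw [Finset.mem_filter, hfrom S hS]
      refine ⟨Finset.mem_univ _, Finset.subset_union_left, Finset.disjoint_union_right.2
        ⟨hFN.symm, Finset.disjoint_left.2 fun e he h => (Finset.mem_sdiff.1 (hS h)).2 he⟩⟩
    · intro G hG
      obtain ⟨h1, h2⟩ := (Finset.mem_filter.1 hG).2
      rw [hgr, Finset.union_sdiff_of_subset h1, SimpleGraph.coe_edgeFinset,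
        SimpleGraph.fromEdgeSet_edgeSet]
    · intro S hS
      rw [Finset.mem_powerset] at hS
      rw [hfrom S hS, Finset.union_sdiff_left]
      exact Finset.sdiff_eq_self_of_disjoint (Finset.disjoint_left.2 fun e he h =>
        (Finset.mem_sdiff.1 (Finset.mem_sdiff.1 (hS he)).1).2 h)
    · intro G hG
      obtain ⟨h1, h2⟩ := (Finset.mem_filter.1 hG).2
      have hc := Finset.card_sdiff_add_card_eq_card h1
      have hle : (G.edgeFinset \ F).card ≤ M.card := Finset.card_le_card (by
        intro e he
        obtain ⟨he1, he2⟩ := Finset.mem_sdiff.1 he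
        exact Finset.mem_sdiff.2 ⟨Finset.mem_sdiff.2 ⟨hGW G he1, he2⟩,
          fun h => Finset.disjoint_left.1 h2 h he1⟩)
      have he : edgeCount G = F.card + (G.edgeFinset \ F).card := by
        unfold edgeCount
        rw [add_comm, hc]
      unfold gnpWeight
      rw [he, show n.choose 2 - (F.card + (G.edgeFinset \ F).card) =
        N.card + (M.card - (G.edgeFinset \ F).card) by omega, pow_add, pow_add]
      ring
  rw [hstart, key, ← Finset.mul_sum, Finset.sum_pow_mul_eq_add_pow]
  simp

lemma gsum_subset (F : Finset (Sym2 (Fin n))) (hF : F ⊆ (⊤ : SimpleGraph (Fin n)).edgeFinset) :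
    gsum n p (fun G => F ⊆ G.edgeFinset) = p ^ F.card := by
  simpa using gsum_cylinder (p := p) F ∅ hF (by simp) (by simp)

/-- The number of pairs of vertices touching a set `D` is at least `|D| (n - 1) / 2`. -/
lemma touch_card (D : Finset (Fin n)) :
    D.card * (n - 1) ≤
      2 * ((⊤ : SimpleGraph (Fin n)).edgeFinset.filter fun e => ∃ x ∈ D, x ∈ e).card := by
  let S : Finset (Fin n × Fin n) := D.biUnion fun x => (Finset.univ.erase x).image fun y => (x, y)
  have hS : S.card = D.card * (n - 1) := by
    rw [Finset.card_biUnion]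
    · rw [Finset.sum_const_nat (m := n - 1)]
      intro x _
      rw [Finset.card_image_of_injective _ (Prod.mk_right_injective x)]
      simp
    · intro x _ y _ hxy
      rw [Function.onFun, Finset.disjoint_left]
      intro z hz hz'
      obtain ⟨a, _, rfl⟩ := Finset.mem_image.1 hz
      obtain ⟨b, _, hb⟩ := Finset.mem_image.1 hz'
      exact hxy (congrArg Prod.fst hb).symm
  rw [← hS]
  apply Finset.card_le_mul_card_image_of_maps_to (f := fun z : Fin n × Fin n => s(z.1, z.2))
  · intro z hz
    obtain ⟨x, hx, hz⟩ := Finset.mem_biUnion.1 hz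
    obtain ⟨y, hy, rfl⟩ := Finset.mem_image.1 hz
    refine Finset.mem_filter.2 ⟨?_, x, hx, by simp⟩
    simpa using (Finset.ne_of_mem_erase hy).symm
  · intro e _
    induction e with
    | _ a b =>
      refine (Finset.card_le_card (t := {(a, b), (b, a)}) ?_).trans Finset.card_le_two
      intro z hz
      have := (Finset.mem_filter.1 hz).2
      simp only [Sym2.eq_iff] at this
      rcases this with ⟨h1, h2⟩ | ⟨h1, h2⟩
      · simp [← h1, ← h2]
      · simp [← h1, ← h2]

/-- The probability that a given pendant structure occurs together with the edges `E₀` inside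
`T`. Essentially all of the at least `|D| (n - 1) / 2` pairs touching `D` have to be absent. -/
lemma gsum_pend (hp0 : 0 ≤ p) (hp1 : p ≤ 1) (hd : 5 ≤ n * p) (T : Finset (Fin n))
    (E₀ : Finset (Sym2 (Fin n))) (hE : E₀ ⊆ (⊤ : SimpleGraph (Fin n)).edgeFinset)
    (hT : ∀ e ∈ E₀, ∀ x ∈ e, x ∈ T) (X D : Finset (Fin n)) (par : Fin n → Fin n) :
    gsum n p (fun G => E₀ ⊆ G.edgeFinset ∧ Pend G T X D par) ≤
      p ^ E₀.card * (p ^ X.card * Real.exp (-(n * p - 5) / 4) ^ X.card) := by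
  have hnn : 0 ≤ p ^ E₀.card * (p ^ X.card * Real.exp (-(n * p - 5) / 4) ^ X.card) := by positivity
  by_cases hv : Disjoint X T ∧ D ⊆ X ∧ X.card ≤ 2 * D.card ∧ (∀ x ∈ X, x ≠ par x) ∧
      Set.InjOn (fun x => s(x, par x)) X
  swap
  · rw [gsum_false]
    · exact hnn
    · rintro G ⟨-, h1, h2, h3, h4, h5, h6, h7⟩
      exact hv ⟨h1, h2, h3, fun x hx => (h6 x hx).ne, h5⟩
  obtain ⟨h1, h2, h3, h4, h5⟩ := hv
  let P := X.image fun x => s(x, par x)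
  have hPc : P.card = X.card := Finset.card_image_of_injOn h5
  have hPt : P ⊆ (⊤ : SimpleGraph (Fin n)).edgeFinset := by
    intro e he
    obtain ⟨x, hx, rfl⟩ := Finset.mem_image.1 he
    simpa using h4 x hx
  let Q := (⊤ : SimpleGraph (Fin n)).edgeFinset.filter fun e => ∃ x ∈ D, x ∈ e
  have hEP : Disjoint E₀ P := Finset.disjoint_left.2 fun e he he' => by
    obtain ⟨x, hx, rfl⟩ := Finset.mem_image.1 he'
    exact Finset.disjoint_left.1 h1 hx (hT _ he x (by simp))
  have hcyl := gsum_cylinder (p := p) (E₀ ∪ P) (Q \ P) (Finset.union_subset hE hPt)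
    (Finset.sdiff_subset.trans (Finset.filter_subset _ _)) (by
      refine Finset.disjoint_left.2 fun e he he' => ?_
      obtain ⟨hq, hp⟩ := Finset.mem_sdiff.1 he'
      rcases Finset.mem_union.1 he with h | h
      · obtain ⟨-, x, hx, hxe⟩ := Finset.mem_filter.1 hq
        exact Finset.disjoint_left.1 h1 (h2 hx) (hT e h x hxe)
      · exact hp h)
  have hle : gsum n p (fun G => E₀ ⊆ G.edgeFinset ∧ Pend G T X D par) ≤
      gsum n p (fun G => E₀ ∪ P ⊆ G.edgeFinset ∧ Disjoint (Q \ P) G.edgeFinset) := by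
    refine gsum_mono hp0 hp1 ?_
    rintro G ⟨g0, -, -, -, -, -, g6, g7⟩
    refine ⟨Finset.union_subset g0 ?_, ?_⟩
    · intro e he
      obtain ⟨x, hx, rfl⟩ := Finset.mem_image.1 he
      simpa using g6 x hx
    · refine Finset.disjoint_left.2 fun e he he' => ?_
      obtain ⟨hq, hp⟩ := Finset.mem_sdiff.1 he
      obtain ⟨-, x, hx, hxe⟩ := Finset.mem_filter.1 hq
      obtain ⟨y, rfl⟩ := Sym2.mem_iff_exists.1 hxe
      obtain ⟨z, hz, hzz⟩ := g7 x hx y (by simpa using he')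
      exact hp (Finset.mem_image.2 ⟨z, hz, hzz.symm⟩)
  refine hle.trans ?_
  rw [hcyl, Finset.card_union_of_disjoint hEP, hPc, pow_add, mul_assoc]
  gcongr
  have htouch : D.card * (n - 1) ≤ 2 * Q.card := touch_card D
  have hsd : Q.card ≤ (Q \ P).card + X.card := by
    rw [← hPc]; exact Finset.card_le_card_sdiff_add_card
  have hn : 1 ≤ n := by
    rcases Nat.eq_zero_or_pos n with h | h
    · subst h; norm_num at hd
    · exact h
  have hreal : (D.card : ℝ) * (n - 1) ≤ 2 * ((Q \ P).card + X.card) := by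
    have : D.card * (n - 1) ≤ 2 * ((Q \ P).card + X.card) := htouch.trans (by omega)
    have h := (Nat.cast_le (α := ℝ)).2 this
    push_cast [hn] at h
    exact h
  have hX : (X.card : ℝ) ≤ 2 * D.card := by exact_mod_cast h3
  calc (1 - p) ^ (Q \ P).card ≤ Real.exp (-p) ^ (Q \ P).card := by
        gcongr
        have := Real.add_one_le_exp (-p)
        linarith
    _ = Real.exp (-(p * (Q \ P).card)) := by rw [← Real.exp_nat_mul]; ring_nf
    _ ≤ Real.exp (X.card * (-(n * p - 5) / 4)) := by
        rw [Real.exp_le_exp]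
        have e1 : p * (D.card * (n - 1)) ≤ p * (2 * ((Q \ P).card + X.card)) := by gcongr
        have e2 : p * X.card ≤ p * (2 * D.card) := by gcongr
        have e3 : p * D.card ≤ D.card := by
          have : (0 : ℝ) ≤ D.card := by positivity
          nlinarith
        have e4 : (n * p - 5) * X.card ≤ (n * p - 5) * (2 * D.card) := by
          apply mul_le_mul_of_nonneg_left hX; linarith
        nlinarith
    _ = _ := by rw [Real.exp_nat_mul]

end Probability

/-! ### The bound for fixed maps -/

section FixedConfiguration

variable {n : ℕ} {p : ℝ}

/-- Union bound over all pendant structures of linear size in `k`. The terms with `|X| = m` add up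
to at most the `m`-th power of the left-hand side of `hr`, times `p ^ |E₀|`. -/
lemma gsum_pend_le (hp0 : 0 ≤ p) (hp1 : p ≤ 1) (hd : 5 ≤ n * p) (T : Finset (Fin n))
    (E₀ : Finset (Sym2 (Fin n))) (hE : E₀ ⊆ (⊤ : SimpleGraph (Fin n)).edgeFinset)
    (hT : ∀ e ∈ E₀, ∀ x ∈ e, x ∈ T) (k : ℕ) (hk : 3 ≤ k) (hTc : T.card ≤ 2 * k)
    (δ : ℝ) (hδ0 : 0 < δ) (hδ1 : δ ≤ 1)
    (hr : 2 * Real.exp 201 * (n * p) * Real.exp (-(n * p - 5) / 4) ≤ 1 / 8 * δ ^ 100) :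
    gsum n p (fun G => E₀ ⊆ G.edgeFinset ∧
        ∃ X D : Finset (Fin n), ∃ par, Pend G T X D par ∧ k ≤ 100 * D.card) ≤
      p ^ E₀.card * (1 / 2 * δ ^ k) := by
  set ρ := Real.exp (-(n * p - 5) / 4) with hρ
  let g : ℕ → ℝ := fun m => if k ≤ 100 * m then
    p ^ E₀.card * (2 ^ m * ((m + 2 * k) ^ m * (p ^ m * ρ ^ m))) else 0
  have hρ0 : 0 ≤ ρ := (Real.exp_pos _).le
  have hX : ∀ X : Finset (Fin n), gsum n p (fun G => k ≤ 100 * X.card ∧ E₀ ⊆ G.edgeFinset ∧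
      ∃ D : Finset (Fin n), ∃ par, Pend G T X D par) ≤ g X.card := by
    intro X
    by_cases hkX : k ≤ 100 * X.card
    swap
    · rw [gsum_false fun G h => hkX h.1]
      simp [g, hkX]
    simp only [g, if_pos hkX]
    let I : Finset (Fin n → Fin n) := Fintype.piFinset fun x => if x ∈ X then X ∪ T else {x}
    have hI : (I.card : ℝ) ≤ (X.card + 2 * k) ^ X.card := by
      have h1 : I.card = (X ∪ T).card ^ X.card := by
        rw [Fintype.card_piFinset]
        rw [← Finset.prod_subset (Finset.subset_univ X)]
        · rw [Finset.prod_congr rfl (g := fun _ => (X ∪ T).card), Finset.prod_const]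
          intro x hx; rw [if_pos hx]
        · intro x _ hx; rw [if_neg hx]; simp
      rw [h1]
      have : (X ∪ T).card ≤ X.card + 2 * k := (Finset.card_union_le _ _).trans (by omega)
      exact_mod_cast Nat.pow_le_pow_left this _
    have hu := gsum_union hp0 hp1 (n := n) (X.powerset ×ˢ I)
      (A := fun G => k ≤ 100 * X.card ∧ E₀ ⊆ G.edgeFinset ∧
        ∃ D : Finset (Fin n), ∃ par, Pend G T X D par)
      (B := fun i G => E₀ ⊆ G.edgeFinset ∧ Pend G T X i.1 i.2) (by
        rintro G ⟨-, h0, D, par, h1, h2, h3, h4, h5, h6, h7⟩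
        have hpar : ∀ x ∈ X, (if x ∈ X then par x else x) = par x := fun x hx => if_pos hx
        refine ⟨(D, fun x => if x ∈ X then par x else x), ?_, h0, h1, h2, h3, ?_, ?_, ?_, ?_⟩
        · refine Finset.mem_product.2 ⟨Finset.mem_powerset.2 h2, ?_⟩
          rw [Fintype.mem_piFinset]
          intro x
          by_cases hx : x ∈ X
          · simpa [hx] using h4 x hx
          · simp [hx]
        · intro x hx; simpa only [hpar x hx] using h4 x hx
        · intro x hx y hy hxy
          simp only [hpar x hx, hpar y hy] at hxy
          exact h5 hx hy hxy
        · intro x hx; simpa only [hpar x hx] using h6 x hx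
        · intro x hx y hxy
          obtain ⟨z, hz, hzz⟩ := h7 x hx y hxy
          exact ⟨z, hz, by simpa only [hpar z hz] using hzz⟩)
    refine hu.trans ?_
    refine (Finset.sum_le_card_nsmul _ _ _ fun i _ =>
      gsum_pend hp0 hp1 hd T E₀ hE hT X i.1 i.2).trans ?_
    rw [nsmul_eq_mul, Finset.card_product, Finset.card_powerset]
    push_cast
    have : 0 ≤ p ^ E₀.card * (2 ^ X.card * (p ^ X.card * ρ ^ X.card)) := by positivity
    calc (2 : ℝ) ^ X.card * I.card * (p ^ E₀.card * (p ^ X.card * ρ ^ X.card))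
        = I.card * (p ^ E₀.card * (2 ^ X.card * (p ^ X.card * ρ ^ X.card))) := by ring
      _ ≤ (X.card + 2 * k) ^ X.card * (p ^ E₀.card * (2 ^ X.card * (p ^ X.card * ρ ^ X.card))) := by
          gcongr
      _ = _ := by ring
  have hterm : ∀ m : ℕ, (n.choose m : ℝ) * g m ≤
      p ^ E₀.card * (1 / 4 * δ ^ k) * (1 / 2) ^ m := by
    intro m
    by_cases hkm : k ≤ 100 * m
    swap
    · simp only [g, if_neg hkm, mul_zero]; positivity
    simp only [g, if_pos hkm]
    have hch : (n.choose m : ℝ) ≤ n ^ m / m.factorial := Nat.choose_le_pow_div m n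
    -- `x ^ m / m! ≤ exp x` with `x = m + 2 k ≤ 201 m`.
    have hexp : ((m : ℝ) + 2 * k) ^ m / m.factorial ≤ Real.exp 201 ^ m := by
      refine (Real.pow_div_factorial_le_exp _ (by positivity) m).trans ?_
      rw [← Real.exp_nat_mul, Real.exp_le_exp]
      have : (k : ℝ) ≤ 100 * m := by exact_mod_cast hkm
      linarith
    have hm1 : 1 ≤ m := by omega
    calc (n.choose m : ℝ) * (p ^ E₀.card * (2 ^ m * ((m + 2 * k) ^ m * (p ^ m * ρ ^ m))))
        ≤ n ^ m / m.factorial * (p ^ E₀.card * (2 ^ m * ((m + 2 * k) ^ m * (p ^ m * ρ ^ m)))) := by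
          gcongr
      _ = p ^ E₀.card * (2 ^ m * ((m + 2 * k) ^ m / m.factorial) * (n * p) ^ m * ρ ^ m) := by
          rw [mul_pow]; ring
      _ ≤ p ^ E₀.card * (2 ^ m * Real.exp 201 ^ m * (n * p) ^ m * ρ ^ m) := by gcongr
      _ = p ^ E₀.card * (2 * Real.exp 201 * (n * p) * ρ) ^ m := by simp only [mul_pow]
      _ ≤ p ^ E₀.card * (1 / 8 * δ ^ 100) ^ m := by gcongr
      _ = p ^ E₀.card * ((1 / 4) ^ m * δ ^ (100 * m) * (1 / 2) ^ m) := by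
          rw [pow_mul, show (1 / 8 : ℝ) = 1 / 4 * (1 / 2) by norm_num, mul_pow, mul_pow]; ring
      _ ≤ p ^ E₀.card * (1 / 4 * δ ^ k * (1 / 2) ^ m) := by
          have e1 : (1 / 4 : ℝ) ^ m ≤ 1 / 4 := by
            simpa using pow_le_pow_of_le_one (by norm_num : (0 : ℝ) ≤ 1 / 4) (by norm_num) hm1
          have e2 : δ ^ (100 * m) ≤ δ ^ k := pow_le_pow_of_le_one hδ0.le hδ1 hkm
          gcongr
      _ = _ := by ring
  calc gsum n p (fun G => E₀ ⊆ G.edgeFinset ∧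
        ∃ X D : Finset (Fin n), ∃ par, Pend G T X D par ∧ k ≤ 100 * D.card)
      ≤ ∑ X ∈ (Finset.univ : Finset (Fin n)).powerset, gsum n p (fun G => k ≤ 100 * X.card ∧
        E₀ ⊆ G.edgeFinset ∧ ∃ D : Finset (Fin n), ∃ par, Pend G T X D par) := by
        refine gsum_union hp0 hp1 _ ?_
        rintro G ⟨h0, X, D, par, hP, hk⟩
        refine ⟨X, by simp, ?_, h0, D, par, hP⟩
        have := Finset.card_le_card hP.2.1
        omega
    _ ≤ ∑ X ∈ (Finset.univ : Finset (Fin n)).powerset, g X.card :=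
        Finset.sum_le_sum fun X _ => hX X
    _ = ∑ m ∈ Finset.range (n + 1), (n.choose m : ℝ) * g m := by
        rw [Finset.sum_powerset_apply_card]; simp
    _ ≤ ∑ m ∈ Finset.range (n + 1), p ^ E₀.card * (1 / 4 * δ ^ k) * (1 / 2) ^ m :=
        Finset.sum_le_sum fun m _ => hterm m
    _ = p ^ E₀.card * (1 / 4 * δ ^ k) * ∑ m ∈ Finset.range (n + 1), (1 / 2 : ℝ) ^ m := by
        rw [Finset.mul_sum]
    _ ≤ p ^ E₀.card * (1 / 4 * δ ^ k) * 2 := by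
        gcongr; exact sum_geometric_two_le _
    _ = _ := by ring

/-- Union bound for the event that a small set `A` sends unusually many additional edges to `T`.
One may enlarge `A` to have exactly `⌊k / 100⌋ ≤ j / 3` vertices, which leaves at most `n ^ (j / 3)`
choices for `A` and `(2 k ^ 2) ^ j` choices for `j` of the edges. -/
lemma gsum_dense_le (hp0 : 0 ≤ p) (hp1 : p ≤ 1) (T : Finset (Fin n))
    (E₀ : Finset (Sym2 (Fin n))) (hE : E₀ ⊆ (⊤ : SimpleGraph (Fin n)).edgeFinset)
    (k j : ℕ) (hkn : k ≤ n) (hTc : T.card ≤ 2 * k) (hj : 1 ≤ j) (hjk : 3 * k ≤ 80 * j)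
    (δ : ℝ) (hδ0 : 0 < δ) (hδ1 : δ ≤ 1)
    (hr : 2 * (k : ℝ) ^ 2 * p * (n : ℝ) ^ (1 / 3 : ℝ) ≤ 1 / 2 * δ ^ 27) :
    gsum n p (fun G => E₀ ⊆ G.edgeFinset ∧ ∃ A : Finset (Fin n), 100 * A.card ≤ k ∧
        j ≤ (G.edgeFinset.filter fun e => e ∉ E₀ ∧ ∃ a ∈ A, ∃ t ∈ T, e = s(a, t)).card) ≤
      p ^ E₀.card * (1 / 2 * δ ^ k) := by
  rcases Nat.eq_zero_or_pos n with hn | hn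
  · subst hn
    rw [gsum_false]
    · positivity
    · rintro G ⟨-, A, -, hA⟩
      rw [Finset.card_eq_zero.2 (by simp [Finset.eq_empty_of_isEmpty A])] at hA
      omega
  let K : Finset (Fin n) → Finset (Sym2 (Fin n)) := fun A =>
    (((A ×ˢ T).image fun z => s(z.1, z.2)) ∩ (⊤ : SimpleGraph (Fin n)).edgeFinset) \ E₀
  have hK : ∀ A, (K A).card ≤ A.card * (2 * k) := fun A =>
    calc (K A).card ≤ ((A ×ˢ T).image fun z : Fin n × Fin n => s(z.1, z.2)).card :=
          Finset.card_le_card (Finset.sdiff_subset.trans Finset.inter_subset_left)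
      _ ≤ (A ×ˢ T).card := Finset.card_image_le
      _ = A.card * T.card := Finset.card_product _ _
      _ ≤ _ := Nat.mul_le_mul_left _ hTc
  set a := k / 100 with ha
  have hF : ∀ A F : Finset _, F ∈ Finset.powersetCard j (K A) →
      gsum n p (fun G => E₀ ⊆ G.edgeFinset ∧ F ⊆ G.edgeFinset) ≤ p ^ E₀.card * p ^ j := by
    intro A F hF
    obtain ⟨hFK, hFc⟩ := Finset.mem_powersetCard.1 hF
    have hdis : Disjoint E₀ F := Finset.disjoint_left.2 fun e he he' =>
      (Finset.mem_sdiff.1 (hFK he')).2 he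
    have hsub : F ⊆ (⊤ : SimpleGraph (Fin n)).edgeFinset := fun e he =>
      (Finset.mem_inter.1 (Finset.mem_sdiff.1 (hFK he)).1).2
    refine (gsum_mono hp0 hp1 fun G hG => Finset.union_subset hG.1 hG.2).trans ?_
    rw [gsum_subset _ (Finset.union_subset hE hsub), Finset.card_union_of_disjoint hdis, hFc,
      pow_add]
  have hA : ∀ A ∈ Finset.powersetCard a (Finset.univ : Finset (Fin n)),
      gsum n p (fun G => E₀ ⊆ G.edgeFinset ∧ ∃ F ∈ Finset.powersetCard j (K A),
        F ⊆ G.edgeFinset) ≤ (2 * (k : ℝ) ^ 2) ^ j * (p ^ E₀.card * p ^ j) := by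
    intro A hA
    have hAc : A.card = a := (Finset.mem_powersetCard.1 hA).2
    refine (gsum_union hp0 hp1 (Finset.powersetCard j (K A))
      (B := fun F G => E₀ ⊆ G.edgeFinset ∧ F ⊆ G.edgeFinset) ?_).trans ?_
    · rintro G ⟨h0, F, hF, hFG⟩
      exact ⟨F, hF, h0, hFG⟩
    refine (Finset.sum_le_card_nsmul _ _ _ fun F hF' => hF A F hF').trans ?_
    rw [nsmul_eq_mul, Finset.card_powersetCard]
    have h1 : (K A).card.choose j ≤ (2 * k ^ 2) ^ j := by
      refine (Nat.choose_le_pow _ _).trans (Nat.pow_le_pow_left ?_ j)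
      refine (hK A).trans ?_
      rw [hAc]
      calc a * (2 * k) ≤ k * (2 * k) := Nat.mul_le_mul_right _ (Nat.div_le_self _ _)
        _ = 2 * k ^ 2 := by ring
    have h2 : ((K A).card.choose j : ℝ) ≤ (2 * (k : ℝ) ^ 2) ^ j := by exact_mod_cast h1
    gcongr
  have hn1 : (1 : ℝ) ≤ n := by exact_mod_cast hn
  calc gsum n p (fun G => E₀ ⊆ G.edgeFinset ∧ ∃ A : Finset (Fin n), 100 * A.card ≤ k ∧
        j ≤ (G.edgeFinset.filter fun e => e ∉ E₀ ∧ ∃ a ∈ A, ∃ t ∈ T, e = s(a, t)).card)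
      ≤ ∑ A ∈ Finset.powersetCard a (Finset.univ : Finset (Fin n)),
        gsum n p (fun G => E₀ ⊆ G.edgeFinset ∧ ∃ F ∈ Finset.powersetCard j (K A),
          F ⊆ G.edgeFinset) := by
        refine gsum_union hp0 hp1 _ ?_
        rintro G ⟨h0, A, hA, hjA⟩
        obtain ⟨B, hAB, hBc⟩ := Finset.exists_superset_card_eq (s := A) (n := a) (by omega)
          (by rw [Fintype.card_fin]; omega)
        obtain ⟨F, hF, hFc⟩ := Finset.exists_subset_card_eq hjA
        refine ⟨B, Finset.mem_powersetCard.2 ⟨Finset.subset_univ _, hBc⟩, h0, F,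
          Finset.mem_powersetCard.2 ⟨fun e he => ?_, hFc⟩,
          fun e he => (Finset.mem_filter.1 (hF he)).1⟩
        obtain ⟨h1, h2, x, hx, t, ht, rfl⟩ := Finset.mem_filter.1 (hF he)
        refine Finset.mem_sdiff.2 ⟨Finset.mem_inter.2 ⟨Finset.mem_image.2
          ⟨(x, t), Finset.mem_product.2 ⟨hAB hx, ht⟩, rfl⟩, ?_⟩, h2⟩
        exact SimpleGraph.edgeFinset_mono le_top h1
    _ ≤ (n.choose a : ℝ) * ((2 * (k : ℝ) ^ 2) ^ j * (p ^ E₀.card * p ^ j)) := by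
        refine (Finset.sum_le_card_nsmul _ _ _ hA).trans ?_
        rw [nsmul_eq_mul, Finset.card_powersetCard, Finset.card_univ, Fintype.card_fin]
    _ ≤ ((n : ℝ) ^ (1 / 3 : ℝ)) ^ j * ((2 * (k : ℝ) ^ 2) ^ j * (p ^ E₀.card * p ^ j)) := by
        gcongr
        calc (n.choose a : ℝ) ≤ (n : ℝ) ^ a := by exact_mod_cast Nat.choose_le_pow _ _
          _ = (n : ℝ) ^ (a : ℝ) := (Real.rpow_natCast _ _).symm
          _ ≤ (n : ℝ) ^ ((1 / 3 : ℝ) * j) := by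
            apply Real.rpow_le_rpow_of_exponent_le hn1
            have : 3 * a ≤ j := by omega
            have : (3 * a : ℝ) ≤ j := by exact_mod_cast this
            linarith
          _ = _ := by rw [Real.rpow_mul (by positivity), Real.rpow_natCast]
    _ = p ^ E₀.card * (2 * (k : ℝ) ^ 2 * p * (n : ℝ) ^ (1 / 3 : ℝ)) ^ j := by
        simp only [mul_pow]; ring
    _ ≤ p ^ E₀.card * (1 / 2 * δ ^ 27) ^ j := by gcongr
    _ = p ^ E₀.card * ((1 / 2) ^ j * δ ^ (27 * j)) := by rw [mul_pow, pow_mul]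
    _ ≤ p ^ E₀.card * (1 / 2 * δ ^ k) := by
        have e1 : (1 / 2 : ℝ) ^ j ≤ 1 / 2 := by
          simpa using pow_le_pow_of_le_one (by norm_num : (0 : ℝ) ≤ 1 / 2) (by norm_num) hj
        have e2 : δ ^ (27 * j) ≤ δ ^ k := pow_le_pow_of_le_one hδ0.le hδ1 (by omega)
        gcongr

/-- The bound for a fixed set `T` containing the prescribed edges `E₀`: the conditional probability,
given that `E₀` is present, of more than `k / 8` vertices of `T` near the complement of the
2-core. -/
lemma fixed_bound (hp0 : 0 ≤ p) (hp1 : p ≤ 1) (hd : 5 ≤ n * p) (T : Finset (Fin n))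
    (E₀ : Finset (Sym2 (Fin n))) (hE : E₀ ⊆ (⊤ : SimpleGraph (Fin n)).edgeFinset)
    (hT : ∀ e ∈ E₀, ∀ x ∈ e, x ∈ T)
    (hmin : ∀ t ∈ T, 2 ≤ (T.filter fun v => s(t, v) ∈ E₀).card)
    (hmax : ∀ t, (T.filter fun v => s(t, v) ∈ E₀).card ≤ 4)
    (k : ℕ) (hk : 3 ≤ k) (hkn : k ≤ n) (hTc : T.card ≤ 2 * k)
    (δ : ℝ) (hδ0 : 0 < δ) (hδ1 : δ ≤ 1)
    (hr1 : 2 * Real.exp 201 * (n * p) * Real.exp (-(n * p - 5) / 4) ≤ 1 / 8 * δ ^ 100)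
    (hr2 : 2 * (k : ℝ) ^ 2 * p * (n : ℝ) ^ (1 / 3 : ℝ) ≤ 1 / 2 * δ ^ 27) :
    gsum n p (fun G => E₀ ⊆ G.edgeFinset ∧ k < 8 * (T.filter (Near G)).card) ≤
      δ ^ k * gsum n p (fun G => E₀ ⊆ G.edgeFinset) := by
  rw [gsum_subset E₀ hE]
  have h1 := gsum_pend_le hp0 hp1 hd T E₀ hE hT k hk hTc δ hδ0 hδ1 hr1
  have h2 := gsum_dense_le hp0 hp1 T E₀ hE k ((3 * k + 79) / 80) hkn hTc (by omega) (by omega)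
    δ hδ0 hδ1 hr2
  have h3 := gsum_or hp0 hp1 (n := n)
    (A := fun G => E₀ ⊆ G.edgeFinset ∧ k < 8 * (T.filter (Near G)).card)
    (B := fun G => E₀ ⊆ G.edgeFinset ∧
        ∃ X D : Finset (Fin n), ∃ par, Pend G T X D par ∧ k ≤ 100 * D.card)
    (C := fun G => E₀ ⊆ G.edgeFinset ∧ ∃ A : Finset (Fin n), 100 * A.card ≤ k ∧
      (3 * k + 79) / 80 ≤
        (G.edgeFinset.filter fun e => e ∉ E₀ ∧ ∃ a ∈ A, ∃ t ∈ T, e = s(a, t)).card) (by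
      rintro G ⟨h0, hG⟩
      obtain ⟨X, D, par, hP, A, hAD, hc⟩ := structure_lemma G T E₀ (fun e he => h0 he)
        (by convert hmin) (by convert hmax)
      by_cases hD : k ≤ 100 * D.card
      · exact Or.inl ⟨h0, X, D, par, hP, hD⟩
      · refine Or.inr ⟨h0, A, by omega, ?_⟩
        have hc' : (T.filter (Near G)).card ≤ 5 * A.card + 2 *
            (G.edgeFinset.filter fun e => e ∉ E₀ ∧ ∃ a ∈ A, ∃ t ∈ T, e = s(a, t)).card := by
          convert hc
        omega)
  linarith

end FixedConfiguration

/-! ### Configurations of types I and II -/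

section Configurations

variable {n k : ℕ} {p : ℝ}

/-- The set `T` of vertices used by a configuration. -/
noncomputable def cfgVerts (φ ψ : Fin k → Fin n) : Finset (Fin n) :=
  Finset.univ.image φ ∪ Finset.univ.image ψ

/-- The edges a configuration requires, where `Step i j` says that the index `j` follows `i`. -/
noncomputable def cfgEdges (Step : Fin k → Fin k → Prop) (φ ψ : Fin k → Fin n) :
    Finset (Sym2 (Fin n)) :=
  Finset.univ.filter fun e => ∃ i j, Step i j ∧ (e = s(φ i, φ j) ∨ e = s(ψ i, ψ j))

lemma mem_cfgVerts {φ ψ : Fin k → Fin n} {v : Fin n} :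
    v ∈ cfgVerts φ ψ ↔ (∃ i, φ i = v) ∨ ∃ i, ψ i = v := by
  simp [cfgVerts]

lemma mem_cfgEdges {Step : Fin k → Fin k → Prop} {φ ψ : Fin k → Fin n} {e : Sym2 (Fin n)} :
    e ∈ cfgEdges Step φ ψ ↔ ∃ i j, Step i j ∧ (e = s(φ i, φ j) ∨ e = s(ψ i, ψ j)) := by
  simp [cfgEdges]

lemma cfgEdges_subset_iff {Step : Fin k → Fin k → Prop} {φ ψ : Fin k → Fin n}
    {G : SimpleGraph (Fin n)} :
    cfgEdges Step φ ψ ⊆ G.edgeFinset ↔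
      (∀ i j, Step i j → G.Adj (φ i) (φ j)) ∧ ∀ i j, Step i j → G.Adj (ψ i) (ψ j) := by
  constructor
  · intro h
    exact ⟨fun i j hij => by simpa using h (mem_cfgEdges.2 ⟨i, j, hij, Or.inl rfl⟩),
      fun i j hij => by simpa using h (mem_cfgEdges.2 ⟨i, j, hij, Or.inr rfl⟩)⟩
  · rintro ⟨h1, h2⟩ e he
    obtain ⟨i, j, hij, rfl | rfl⟩ := mem_cfgEdges.1 he
    · simpa using h1 i j hij
    · simpa using h2 i j hij

/-- Along an injective sequence a vertex has at most two neighbours: the next and the previous. -/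
lemma two_nbrs {Step : Fin k → Fin k → Prop}
    (hs : ∀ i j j', Step i j → Step i j' → j = j') (hp : ∀ i i' j, Step i j → Step i' j → i = i')
    {φ : Fin k → Fin n} (hφ : Function.Injective φ) (t : Fin n) :
    ∃ a b, ∀ v i j, Step i j → s(t, v) = s(φ i, φ j) → v = a ∨ v = b := by
  have h1 : ∃ a, ∀ v i j, Step i j → t = φ i → v = φ j → v = a := by
    by_cases h : ∃ i j, Step i j ∧ t = φ i
    · obtain ⟨i, j, hij, hi⟩ := h
      refine ⟨φ j, fun v i' j' hij' hi' hv => ?_⟩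
      obtain rfl : i = i' := hφ (hi ▸ hi')
      rw [hv, hs i j j' hij hij']
    · exact ⟨t, fun v i j hij hi _ => absurd ⟨i, j, hij, hi⟩ h⟩
  have h2 : ∃ b, ∀ v i j, Step i j → t = φ j → v = φ i → v = b := by
    by_cases h : ∃ i j, Step i j ∧ t = φ j
    · obtain ⟨i, j, hij, hj⟩ := h
      refine ⟨φ i, fun v i' j' hij' hj' hv => ?_⟩
      obtain rfl : j = j' := hφ (hj ▸ hj')
      rw [hv, hp i i' j hij hij']
    · exact ⟨t, fun v i j hij hi _ => absurd ⟨i, j, hij, hi⟩ h⟩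
  obtain ⟨a, ha⟩ := h1
  obtain ⟨b, hb⟩ := h2
  refine ⟨a, b, fun v i j hij hv => ?_⟩
  rcases Sym2.eq_iff.1 hv with ⟨h, h'⟩ | ⟨h, h'⟩
  · exact Or.inl (ha v i j hij h h')
  · exact Or.inr (hb v i j hij h h')

lemma peripheral_ncard (G : SimpleGraph (Fin n)) (φ ψ : Fin k → Fin n) :
    (peripheral G φ ψ).ncard = ((cfgVerts φ ψ).filter (Near G)).card := by
  rw [← Set.ncard_coe_finset]
  congr 1
  ext v
  simp [peripheral, Near, mem_cfgVerts]

/-- The bound for fixed maps `φ` and `ψ`, when every vertex used lies on two required edges. -/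
lemma cfg_bound (hp0 : 0 ≤ p) (hp1 : p ≤ 1) (hd : 5 ≤ n * p)
    (Step : Fin k → Fin k → Prop)
    (hs : ∀ i j j', Step i j → Step i j' → j = j') (hp : ∀ i i' j, Step i j → Step i' j → i = i')
    (hne : ∀ i j, Step i j → i ≠ j)
    {φ ψ : Fin k → Fin n} (hφ : Function.Injective φ) (hψ : Function.Injective ψ)
    (hdeg : ∀ t ∈ cfgVerts φ ψ, ∃ a b, a ≠ b ∧ s(t, a) ∈ cfgEdges Step φ ψ ∧
      s(t, b) ∈ cfgEdges Step φ ψ)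
    (hk : 3 ≤ k) (hkn : k ≤ n) (δ : ℝ) (hδ0 : 0 < δ) (hδ1 : δ ≤ 1)
    (hr1 : 2 * Real.exp 201 * (n * p) * Real.exp (-(n * p - 5) / 4) ≤ 1 / 8 * δ ^ 100)
    (hr2 : 2 * (k : ℝ) ^ 2 * p * (n : ℝ) ^ (1 / 3 : ℝ) ≤ 1 / 2 * δ ^ 27) :
    gsum n p (fun G => (k : ℝ) / 8 < ((peripheral G φ ψ).ncard : ℝ) ∧
        cfgEdges Step φ ψ ⊆ G.edgeFinset) ≤
      δ ^ k * gsum n p (fun G => cfgEdges Step φ ψ ⊆ G.edgeFinset) := by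
  have hT : ∀ e ∈ cfgEdges Step φ ψ, ∀ x ∈ e, x ∈ cfgVerts φ ψ := by
    intro e he x hx
    rw [mem_cfgVerts]
    obtain ⟨i, j, -, rfl | rfl⟩ := mem_cfgEdges.1 he <;> rcases Sym2.mem_iff.1 hx with rfl | rfl
    · exact Or.inl ⟨i, rfl⟩
    · exact Or.inl ⟨j, rfl⟩
    · exact Or.inr ⟨i, rfl⟩
    · exact Or.inr ⟨j, rfl⟩
  refine le_trans (gsum_mono hp0 hp1 ?_) (fixed_bound hp0 hp1 hd (cfgVerts φ ψ)
    (cfgEdges Step φ ψ) ?_ hT ?_ ?_ k hk hkn ?_ δ hδ0 hδ1 hr1 hr2)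
  · rintro G ⟨h1, h2⟩
    refine ⟨h2, ?_⟩
    rw [peripheral_ncard] at h1
    have : (k : ℝ) < 8 * ((cfgVerts φ ψ).filter (Near G)).card := by linarith
    exact_mod_cast this
  · intro e he
    obtain ⟨i, j, hij, rfl | rfl⟩ := mem_cfgEdges.1 he
    · simpa using hφ.ne (hne i j hij)
    · simpa using hψ.ne (hne i j hij)
  · intro t ht
    obtain ⟨a, b, hab, ha, hb⟩ := hdeg t ht
    rw [← Finset.card_pair hab]
    refine Finset.card_le_card fun x hx => ?_
    rcases Finset.mem_insert.1 hx with rfl | hx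
    · exact Finset.mem_filter.2 ⟨hT _ ha x (by simp), ha⟩
    · rw [Finset.mem_singleton] at hx
      subst hx
      exact Finset.mem_filter.2 ⟨hT _ hb x (by simp), hb⟩
  · intro t
    obtain ⟨a, b, h1⟩ := two_nbrs hs hp hφ t
    obtain ⟨c, d, h2⟩ := two_nbrs hs hp hψ t
    refine (Finset.card_le_card (t := {a, b, c, d}) ?_).trans Finset.card_le_four
    intro v hv
    obtain ⟨i, j, hij, h | h⟩ := mem_cfgEdges.1 (Finset.mem_filter.1 hv).2
    · rcases h1 v i j hij h with rfl | rfl <;> simp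
    · rcases h2 v i j hij h with rfl | rfl <;> simp
  · refine (Finset.card_union_le _ _).trans ?_
    have h1 := Finset.card_image_le (s := (Finset.univ : Finset (Fin k))) (f := φ)
    have h2 := Finset.card_image_le (s := (Finset.univ : Finset (Fin k))) (f := ψ)
    rw [Finset.card_univ, Fintype.card_fin] at h1 h2
    omega

/-- It suffices to bound the conditional probability for each fixed pair of maps. -/
lemma cond_le {A C : SimpleGraph (Fin n) → (Fin k → Fin n) → (Fin k → Fin n) → Prop} {ε : ℝ}
    (hp0 : 0 ≤ p) (hp1 : p ≤ 1) (hε : 0 ≤ ε)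
    (h : ∀ φ ψ, gsum n p (fun G => A G φ ψ ∧ C G φ ψ) ≤ ε * gsum n p (fun G => C G φ ψ)) :
    gnpCfgCondProb n k p A C ≤ ε := by
  have hswap : ∀ B : SimpleGraph (Fin n) → (Fin k → Fin n) → (Fin k → Fin n) → Prop,
      gnpCfgProb n k p B =
        (∑ φ : Fin k → Fin n, ∑ ψ : Fin k → Fin n, gsum n p (fun G => B G φ ψ)) /
          (n : ℝ) ^ (2 * k) := by
    intro B
    unfold gnpCfgProb gsum
    rw [Finset.sum_comm]
    congr 1
    exact Finset.sum_congr rfl fun φ _ => Finset.sum_comm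
  have hnn : ∀ φ ψ, 0 ≤ gsum n p (fun G => C G φ ψ) := fun φ ψ =>
    Finset.sum_nonneg fun G _ => by
      have := gnpWeight_nonneg hp0 hp1 G
      split_ifs <;> simp [this]
  unfold gnpCfgCondProb
  apply div_le_of_le_mul₀ _ hε
  · rw [hswap, hswap, ← mul_div_assoc]
    gcongr
    rw [Finset.mul_sum]
    refine Finset.sum_le_sum fun φ _ => ?_
    rw [Finset.mul_sum]
    exact Finset.sum_le_sum fun ψ _ => h φ ψ
  · rw [hswap]
    exact div_nonneg (Finset.sum_nonneg fun φ _ => Finset.sum_nonneg fun ψ _ => hnn φ ψ)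
      (by positivity)

/-- Reduction to a fixed pair of maps, for a class of configurations that is described by a
condition on the maps together with the presence of the required edges. -/
lemma cond_le_of_iff (hp0 : 0 ≤ p) (hp1 : p ≤ 1) {ε : ℝ} (hε : 0 ≤ ε)
    {A C : SimpleGraph (Fin n) → (Fin k → Fin n) → (Fin k → Fin n) → Prop}
    {S : (Fin k → Fin n) → (Fin k → Fin n) → Prop} {Step : Fin k → Fin k → Prop}
    (hC : ∀ G φ ψ, C G φ ψ ↔ S φ ψ ∧ cfgEdges Step φ ψ ⊆ G.edgeFinset)
    (h : ∀ φ ψ, S φ ψ → gsum n p (fun G => A G φ ψ ∧ cfgEdges Step φ ψ ⊆ G.edgeFinset) ≤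
      ε * gsum n p (fun G => cfgEdges Step φ ψ ⊆ G.edgeFinset)) :
    gnpCfgCondProb n k p A C ≤ ε := by
  refine cond_le hp0 hp1 hε fun φ ψ => ?_
  by_cases hS : S φ ψ
  · simpa only [hC, hS, true_and] using h φ ψ hS
  · rw [gsum_false (fun G hG => hS ((hC G φ ψ).1 hG.2).1),
      gsum_false (fun G hG => hS ((hC G φ ψ).1 hG).1), mul_zero]

/-- Being of type I is a condition on the maps together with the presence of the edges of the two
cycles. -/
lemma typeI_iff (G : SimpleGraph (Fin n)) (φ ψ : Fin k → Fin n) :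
    TypeI G φ ψ ↔ ((k : ℝ) ≤ Real.log n ∧ (∀ i, φ i ≠ ψ i) ∧ Function.Injective φ ∧
      Function.Injective ψ) ∧ cfgEdges (fun i j => finRotate k i = j) φ ψ ⊆ G.edgeFinset := by
  rw [cfgEdges_subset_iff]
  simp only [forall_eq']
  unfold TypeI IsCycleSeq
  tauto

lemma isPathSeq_iff (G : SimpleGraph (Fin n)) (φ : Fin k → Fin n) :
    IsPathSeq G φ ↔ Function.Injective φ ∧
      ∀ i j : Fin k, (i : ℕ) + 1 = j → G.Adj (φ i) (φ j) := by
  unfold IsPathSeq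
  refine and_congr_right fun _ => ⟨?_, ?_⟩
  · rintro h ⟨i, hi⟩ ⟨j, hj⟩ hij
    simp only at hij
    subst hij
    exact h i hj
  · exact fun h i hi => h _ _ rfl

lemma IsCycleSeq.isPathSeq {G : SimpleGraph (Fin n)} {φ : Fin k → Fin n}
    (h : IsCycleSeq G φ) : IsPathSeq G φ := by
  refine ⟨h.1, fun i hi => ?_⟩
  obtain ⟨m, rfl⟩ : ∃ m, k = m + 1 := ⟨k - 1, by omega⟩
  have := h.2 ⟨i, Nat.lt_of_succ_lt hi⟩
  rwa [finRotate_of_lt (by omega)] at this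

/-- Being of type II is a condition on the maps together with the presence of the edges of the two
paths, since a cycle contains the corresponding path. -/
lemma typeII_iff (G : SimpleGraph (Fin n)) (φ ψ : Fin k → Fin n) :
    TypeII G φ ψ ↔ ((k : ℝ) ≤ Real.log n ∧
      (∀ i : Fin k, (φ i = ψ i ↔ ((i : ℕ) = 0 ∨ (i : ℕ) = k - 1))) ∧ Function.Injective φ ∧
      Function.Injective ψ) ∧
        cfgEdges (fun i j => (i : ℕ) + 1 = j) φ ψ ⊆ G.edgeFinset := by
  rw [cfgEdges_subset_iff]
  unfold TypeII
  rw [or_iff_left_of_imp IsCycleSeq.isPathSeq, or_iff_left_of_imp IsCycleSeq.isPathSeq,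
    isPathSeq_iff, isPathSeq_iff]
  tauto

lemma rotate_ne (hk : 3 ≤ k) (i : Fin k) : finRotate k i ≠ (finRotate k).symm i := by
  obtain ⟨m, rfl⟩ : ∃ m, k = m + 3 := ⟨k - 3, by omega⟩
  intro h
  rw [Equiv.eq_symm_apply, finRotate_apply, finRotate_apply, add_assoc, add_eq_left] at h
  have := congrArg Fin.val h
  simp [Fin.val_add] at this
  rw [Nat.mod_eq_of_lt (by omega)] at this
  omega

lemma rotate_ne_self (hk : 3 ≤ k) (i : Fin k) : finRotate k i ≠ i := by
  obtain ⟨m, rfl⟩ : ∃ m, k = m + 3 := ⟨k - 3, by omega⟩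
  intro h
  rw [finRotate_apply, add_eq_left] at h
  have := congrArg Fin.val h
  simp at this

/-- On a cycle, a vertex has two different neighbours: the next and the previous one. -/
lemma typeI_deg (hk : 3 ≤ k) {φ ψ : Fin k → Fin n} (hφ : Function.Injective φ)
    (hψ : Function.Injective ψ) (t : Fin n) (ht : t ∈ cfgVerts φ ψ) :
    ∃ a b, a ≠ b ∧ s(t, a) ∈ cfgEdges (fun i j => finRotate k i = j) φ ψ ∧
      s(t, b) ∈ cfgEdges (fun i j => finRotate k i = j) φ ψ := by
  simp only [mem_cfgEdges]
  rcases mem_cfgVerts.1 ht with ⟨i, rfl⟩ | ⟨i, rfl⟩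
  · exact ⟨_, _, hφ.ne (rotate_ne hk i), ⟨i, _, rfl, Or.inl rfl⟩,
      ⟨(finRotate k).symm i, i, (finRotate k).apply_symm_apply i, Or.inl Sym2.eq_swap⟩⟩
  · exact ⟨_, _, hψ.ne (rotate_ne hk i), ⟨i, _, rfl, Or.inr rfl⟩,
      ⟨(finRotate k).symm i, i, (finRotate k).apply_symm_apply i, Or.inr Sym2.eq_swap⟩⟩

/-- An inner vertex of a path has two neighbours on it. At the two common end points the two paths leave along different edges, since the vertices next
to the end points are not confluences. -/
lemma typeII_deg (hk : 3 ≤ k) {φ ψ : Fin k → Fin n} (hφ : Function.Injective φ)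
    (hψ : Function.Injective ψ)
    (hc : ∀ i : Fin k, (φ i = ψ i ↔ ((i : ℕ) = 0 ∨ (i : ℕ) = k - 1)))
    (t : Fin n) (ht : t ∈ cfgVerts φ ψ) :
    ∃ a b, a ≠ b ∧ s(t, a) ∈ cfgEdges (fun i j : Fin k => (i : ℕ) + 1 = j) φ ψ ∧
      s(t, b) ∈ cfgEdges (fun i j : Fin k => (i : ℕ) + 1 = j) φ ψ := by
  simp only [mem_cfgEdges]
  have hend : ∀ i : Fin k, ((i : ℕ) = 0 ∨ (i : ℕ) = k - 1) → ∃ a b, a ≠ b ∧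
      (∃ i' j' : Fin k, (i' : ℕ) + 1 = j' ∧
        (s(φ i, a) = s(φ i', φ j') ∨ s(φ i, a) = s(ψ i', ψ j'))) ∧
      (∃ i' j' : Fin k, (i' : ℕ) + 1 = j' ∧
        (s(φ i, b) = s(φ i', φ j') ∨ s(φ i, b) = s(ψ i', ψ j'))) := by
    intro i hi
    have hi' := (hc i).2 hi
    rcases hi with hi | hi
    · refine ⟨φ ⟨1, by omega⟩, ψ ⟨1, by omega⟩, fun h => ?_, ⟨i, ⟨1, by omega⟩, by simp [hi],
        Or.inl rfl⟩, ⟨i, ⟨1, by omega⟩, by simp [hi], Or.inr (by rw [hi'])⟩⟩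
      have := (hc _).1 h
      simp only at this
      omega
    · refine ⟨φ ⟨k - 2, by omega⟩, ψ ⟨k - 2, by omega⟩, fun h => ?_, ⟨⟨k - 2, by omega⟩, i,
        by simp only [hi]; omega, Or.inl Sym2.eq_swap⟩, ⟨⟨k - 2, by omega⟩, i,
        by simp only [hi]; omega, Or.inr (by rw [hi', Sym2.eq_swap])⟩⟩
      have := (hc _).1 h
      simp only at this
      omega
  rcases mem_cfgVerts.1 ht with ⟨i, rfl⟩ | ⟨i, rfl⟩
  · by_cases hi : (i : ℕ) = 0 ∨ (i : ℕ) = k - 1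
    · exact hend i hi
    · have := i.2
      refine ⟨φ ⟨i + 1, by omega⟩, φ ⟨i - 1, by omega⟩, hφ.ne ?_, ⟨i, _, rfl, Or.inl rfl⟩,
        ⟨⟨i - 1, by omega⟩, i, by simp only; omega, Or.inl Sym2.eq_swap⟩⟩
      rw [Ne, Fin.mk.injEq]
      omega
  · by_cases hi : (i : ℕ) = 0 ∨ (i : ℕ) = k - 1
    · rw [← (hc i).2 hi]
      exact hend i hi
    · have := i.2
      refine ⟨ψ ⟨i + 1, by omega⟩, ψ ⟨i - 1, by omega⟩, hψ.ne ?_, ⟨i, _, rfl, Or.inr rfl⟩,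
        ⟨⟨i - 1, by omega⟩, i, by simp only; omega, Or.inr Sym2.eq_swap⟩⟩
      rw [Ne, Fin.mk.injEq]
      omega

end Configurations

/-! ### Asymptotic estimates -/

section Asymptotics

/-- The base of the geometric series over pendant structures is small: `exp (-np / 4)` beats every
power of `np`. -/
lemma eventually_exp_bound (C : ℝ) : ∀ᶠ x : ℝ in Filter.atTop,
    2 * Real.exp 201 * x * Real.exp (-(x - 5) / 4) ≤ 1 / 8 * (x ^ (-C)) ^ 100 := by
  have h := tendsto_rpow_mul_exp_neg_mul_atTop_nhds_zero (1 + C * 100) (1 / 4) (by norm_num)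
  have hc : (0 : ℝ) < 1 / (16 * Real.exp 201 * Real.exp (5 / 4)) := by positivity
  filter_upwards [h.eventually (gt_mem_nhds hc), Filter.eventually_gt_atTop 0] with x hx hx0
  rw [lt_div_iff₀ (by positivity), Real.rpow_add hx0, Real.rpow_one] at hx
  have hy : (0 : ℝ) < x ^ (C * 100) := Real.rpow_pos_of_pos hx0 _
  have e1 : (x ^ (-C)) ^ 100 = 1 / x ^ (C * 100) := by
    rw [← Real.rpow_natCast, ← Real.rpow_mul hx0.le, one_div, ← Real.rpow_neg hx0.le]
    norm_num
  have e2 : Real.exp (-(x - 5) / 4) = Real.exp (-(1 / 4) * x) * Real.exp (5 / 4) := by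
    rw [← Real.exp_add]; ring_nf
  rw [e1, e2, ← mul_div_assoc, mul_one, le_div_iff₀ hy]
  linarith

/-- The base of the bound for additional edges is small: with `k ≤ log n` and `p ≤ C₀ log n / n`,
a factor `n ^ (-2/3)` remains, which beats every power of `log n`. -/
lemma eventually_log_bound (C C₀ : ℝ) (hC₀ : 0 < C₀) : ∀ᶠ n : ℕ in Filter.atTop,
    2 * Real.log n ^ 2 * (C₀ * Real.log n / n) * (n : ℝ) ^ (1 / 3 : ℝ) ≤
      1 / 2 * ((C₀ * Real.log n) ^ (-C)) ^ 27 := by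
  have hc : (0 : ℝ) < 1 / (4 * C₀ * C₀ ^ (C * 27)) := by positivity
  have h := ((isLittleO_log_rpow_rpow_atTop (3 + C * 27) (by norm_num : (0 : ℝ) < 2 / 3)).bound
    hc).and (Filter.eventually_gt_atTop 1)
  refine tendsto_natCast_atTop_atTop.eventually (p := fun x : ℝ =>
    2 * Real.log x ^ 2 * (C₀ * Real.log x / x) * x ^ (1 / 3 : ℝ) ≤
      1 / 2 * ((C₀ * Real.log x) ^ (-C)) ^ 27) ?_
  filter_upwards [h] with x hn
  obtain ⟨hn, hn1⟩ := hn
  have hx0 : 0 < x := by linarith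
  have hL : 0 < Real.log x := Real.log_pos hn1
  set L := Real.log x
  rw [Real.norm_of_nonneg (by positivity), Real.norm_of_nonneg (by positivity),
    Real.rpow_add hL, one_div, inv_mul_eq_div, le_div_iff₀ (by positivity)] at hn
  have e1 : ((C₀ * L) ^ (-C)) ^ 27 = 1 / (C₀ ^ (C * 27) * L ^ (C * 27)) := by
    rw [← Real.rpow_natCast, ← Real.rpow_mul (by positivity), one_div,
      ← Real.mul_rpow hC₀.le hL.le, ← Real.rpow_neg (by positivity)]
    norm_num
  have e2 : x = x ^ (1 / 3 : ℝ) * x ^ (2 / 3 : ℝ) := by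
    rw [← Real.rpow_add hx0]; norm_num
  have e3 : L ^ (3 : ℝ) = L ^ 3 := by
    rw [← Real.rpow_natCast]; norm_num
  rw [e3] at hn
  have e4 : 2 * L ^ 2 * (C₀ * L / x) * x ^ (1 / 3 : ℝ) = 2 * C₀ * L ^ 3 / x ^ (2 / 3 : ℝ) := by
    have : 0 < x ^ (1 / 3 : ℝ) := by positivity
    have : 0 < x ^ (2 / 3 : ℝ) := by positivity
    rw [div_eq_mul_inv (C₀ * L) x]
    nth_rewrite 1 [e2]
    field_simp
  rw [e1, e4, ← mul_div_assoc, div_le_div_iff₀ (by positivity) (by positivity)]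
  linarith

end Asymptotics

/-- If `n·p(n) → ∞` and `p(n) = O(log n / n)`, then for every constant `C > 0`, for all
large `n` and all `3 ≤ k ≤ log n`, the conditional probability (given a type I, resp.
type II, configuration) that more than `k/8` of the vertices of `T` lie within distance 2
of the complement of the 2-core is at most `(np)^{-C·k}`. -/
theorem peripheral_bound (p : ℕ → ℝ) (hp0 : ∀ n, 0 ≤ p n) (hp1 : ∀ n, p n ≤ 1)
    (hgrow : Filter.Tendsto (fun n : ℕ => (n : ℝ) * p n) Filter.atTop Filter.atTop)
    (hupper : ∃ C₀ : ℝ, 0 < C₀ ∧ ∀ᶠ n : ℕ in Filter.atTop, p n ≤ C₀ * Real.log n / n) :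
    ∀ C : ℝ, 0 < C → ∀ᶠ n : ℕ in Filter.atTop, ∀ k : ℕ, 3 ≤ k → (k : ℝ) ≤ Real.log n →
      gnpCfgCondProb n k (p n)
          (fun G φ ψ => (k : ℝ) / 8 < ((peripheral G φ ψ).ncard : ℝ))
          (fun G φ ψ => TypeI G φ ψ)
        ≤ ((n : ℝ) * p n) ^ (-(C * k)) ∧
      gnpCfgCondProb n k (p n)
          (fun G φ ψ => (k : ℝ) / 8 < ((peripheral G φ ψ).ncard : ℝ))
          (fun G φ ψ => TypeII G φ ψ)
        ≤ ((n : ℝ) * p n) ^ (-(C * k)) := by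
  obtain ⟨C₀, hC₀, hup⟩ := hupper
  intro C hC
  filter_upwards [hgrow.eventually (eventually_exp_bound C), eventually_log_bound C C₀ hC₀, hup,
    hgrow.eventually_ge_atTop 5] with n hr1 hr2 hpn hd k hk hkL
  have hd0 : 0 < (n : ℝ) * p n := by linarith
  set δ : ℝ := ((n : ℝ) * p n) ^ (-C) with hδ
  have hδ0 : 0 < δ := Real.rpow_pos_of_pos hd0 _
  have hδ1 : δ ≤ 1 := Real.rpow_le_one_of_one_le_of_nonpos (by linarith) (by linarith)
  have hε : ((n : ℝ) * p n) ^ (-(C * k)) = δ ^ k := by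
    rw [hδ, ← Real.rpow_natCast, ← Real.rpow_mul hd0.le, neg_mul]
  have hn0 : 0 < (n : ℝ) := by
    rcases (Nat.cast_nonneg n : (0 : ℝ) ≤ n).eq_or_lt with h | h
    · rw [← h] at hd0; simp at hd0
    · exact h
  have hkn : k ≤ n := by
    have := Real.log_le_self hn0.le
    exact_mod_cast hkL.trans this
  have hr3 : 2 * (k : ℝ) ^ 2 * p n * (n : ℝ) ^ (1 / 3 : ℝ) ≤ 1 / 2 * δ ^ 27 := by
    have h1 : ((C₀ * Real.log n) ^ (-C)) ≤ δ := by
      refine Real.rpow_le_rpow_of_nonpos hd0 ?_ (by linarith)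
      rw [le_div_iff₀ hn0] at hpn
      linarith
    have h0 : 0 ≤ C₀ * Real.log n := by
      have : (0 : ℝ) ≤ k := by positivity
      exact mul_nonneg hC₀.le (this.trans hkL)
    have hp := hp0 n
    calc 2 * (k : ℝ) ^ 2 * p n * (n : ℝ) ^ (1 / 3 : ℝ)
        ≤ 2 * Real.log n ^ 2 * (C₀ * Real.log n / n) * (n : ℝ) ^ (1 / 3 : ℝ) := by gcongr
      _ ≤ _ := hr2
      _ ≤ _ := by gcongr
  rw [hε]
  constructor
  · refine cond_le_of_iff (hp0 n) (hp1 n) (by positivity) typeI_iff fun φ ψ hS => ?_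
    obtain ⟨-, -, hφ, hψ⟩ := hS
    exact cfg_bound (hp0 n) (hp1 n) hd _ (fun i j j' h h' => h.symm.trans h')
      (fun i i' j h h' => (finRotate k).injective (h.trans h'.symm))
      (fun i j h h' => rotate_ne_self hk i (h.trans h'.symm)) hφ hψ (typeI_deg hk hφ hψ)
      hk hkn δ hδ0 hδ1 hr1 hr3
  · refine cond_le_of_iff (hp0 n) (hp1 n) (by positivity) typeII_iff fun φ ψ hS => ?_
    obtain ⟨-, hc, hφ, hψ⟩ := hS
    exact cfg_bound (hp0 n) (hp1 n) hd _ (fun i j j' h h' => Fin.ext (h.symm.trans h'))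
      (fun i i' j h h' => Fin.ext (by omega))
      (fun i j h h' => by subst h'; omega) hφ hψ (typeII_deg hk hφ hψ hc)
      hk hkn δ hδ0 hδ1 hr1 hr3
end
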